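/- arXiv:1411.4855 — 2 statements merged into one kernel-verified Lean document; each statement's English description precedes it below -/
import Mathlib

section
/- For the central Cantor set C_λ ⊂ [0,1] (λ > 2), the group of derivatives at 0 of C¹ diffeomorphisms of ℝ preserving C_λ and fixing 0 is exactly the cyclic subgroup ⟨λ⟩ = {λ^k : k ∈ ℤ} of ℝ*. -/
open Set Filter Topology Asymptotics

/-- A Cantor subset of the reals: nonempty, compact, perfect, totally disconnected. -/
def IsCantorSet (C : Set ℝ) : Prop :=
  C.Nonempty ∧ IsCompact C ∧ Perfect C ∧ IsTotallyDisconnected C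

/-- `C` is `σ`-sparse: any two points of `C` bound a complementary open interval of
relative length at least `σ`. -/
def SparseSet (σ : ℝ) (C : Set ℝ) : Prop :=
  ∀ a ∈ C, ∀ b ∈ C, a < b →
    ∃ α β : ℝ, a ≤ α ∧ α < β ∧ β ≤ b ∧ Set.Ioo α β ∩ C = ∅ ∧ σ * (b - a) ≤ β - α

/-- `φ` is a `C¹` diffeomorphism of `ℝ` with inverse `ψ`. -/
def IsC1DiffeoPair (φ ψ : ℝ → ℝ) : Prop :=
  ContDiff ℝ 1 φ ∧ ContDiff ℝ 1 ψ ∧ Function.LeftInverse ψ φ ∧ Function.RightInverse ψ φ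
/-- `C` is the central Cantor set of parameter `l`: the attractor of the IFS
`φ₀(x) = x/l`, `φ₁(x) = x/l + (l-1)/l`, i.e. the unique nonempty compact set with
`C = φ₀(C) ∪ φ₁(C)`. -/
def IsCentralCantor (l : ℝ) (C : Set ℝ) : Prop :=
  IsCompact C ∧ C.Nonempty ∧
    C = (fun x => x / l) '' C ∪ (fun x => x / l + (l - 1) / l) '' C

/-!
Every gap of `C_λ` has length `(λ - 2) λ ^ k` with `k ∈ ℤ`, so a diffeomorphism preserving `C_λ`,
which must send gaps to gaps, multiplies the length of each gap by an integer power of `λ`. Gaps of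
`C_λ` accumulate at `0`, so the derivative at `0` is a limit of such powers, hence itself a power
because the powers of `λ` are discrete in `(0, ∞)`.

Conversely, let `S₀ x = x / λ` and `S₁ x = (x + (λ - 1)) / λ`. The first generator of Thompson's
group `F` acts on `C_λ` through the affine pieces `S₀S₀ ↦ S₀`, `S₀S₁ ↦ S₁S₀`, `S₁ ↦ S₁S₁`, the first
of which is multiplication by `λ` near `0`. The pieces sit on disjoint intervals in increasing
order, so they can be glued to a `C¹` diffeomorphism of `ℝ`.
-/

section Stabilizer

/-- The group of `C¹` diffeomorphisms of `ℝ` preserving the set `C` and fixing the point `p`, as a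
subgroup of the permutations of `ℝ`. -/
def c1Stabilizer (C : Set ℝ) (p : ℝ) : Subgroup (Equiv.Perm ℝ) where
  carrier := {e | ContDiff ℝ 1 e ∧ ContDiff ℝ 1 e.symm ∧ e '' C = C ∧ e p = p}
  one_mem' := ⟨contDiff_id, contDiff_id, image_id C, rfl⟩
  mul_mem' := by
    rintro e e' ⟨he, he_symm, heC, hep⟩ ⟨he', he'_symm, he'C, he'p⟩
    refine ⟨he.comp he', he'_symm.comp he_symm, ?_, ?_⟩
    · rw [Equiv.Perm.coe_mul, image_comp, he'C, heC]
    · rw [Equiv.Perm.mul_apply, he'p, hep]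
  inv_mem' := by
    rintro e ⟨he, he_symm, heC, hep⟩
    refine ⟨he_symm, he, ?_, (Equiv.symm_apply_eq e).2 hep.symm⟩
    exact (Equiv.eq_image_iff_symm_image_eq e C C).1 heC.symm

variable {C : Set ℝ} {p : ℝ}

lemma hasStrictDerivAt_of_mem_c1Stabilizer {e : Equiv.Perm ℝ} (he : e ∈ c1Stabilizer C p) (x : ℝ) :
    HasStrictDerivAt e (deriv e x) x :=
  he.1.contDiffAt.hasStrictDerivAt one_ne_zero

variable (C p) in
/-- The derivative at the fixed point `p`, which is multiplicative by the chain rule and therefore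
takes values in the units of `ℝ`. -/
noncomputable def derivHom : c1Stabilizer C p →* ℝˣ :=
  MonoidHom.toHomUnits
    { toFun := fun e => deriv e.1 p
      map_one' := deriv_id p
      map_mul' := by
        rintro ⟨e, he⟩ ⟨e', he'⟩
        have hderiv : HasDerivAt e (deriv e p) (e' p) := by
          rw [he'.2.2.2]
          exact (hasStrictDerivAt_of_mem_c1Stabilizer he p).hasDerivAt
        exact (hderiv.comp p (hasStrictDerivAt_of_mem_c1Stabilizer he' p).hasDerivAt).deriv }

lemma coe_derivHom (e : c1Stabilizer C p) : (derivHom C p e : ℝ) = deriv e.1 p := rfl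

lemma exists_isC1DiffeoPair_iff_mem_range_derivHom (u : ℝ) :
    (∃ φ ψ : ℝ → ℝ, IsC1DiffeoPair φ ψ ∧ φ '' C = C ∧ φ p = p ∧ deriv φ p = u) ↔
      ∃ v ∈ (derivHom C p).range, (v : ℝ) = u := by
  constructor
  · rintro ⟨φ, ψ, ⟨hφ, hψ, hleft, hright⟩, hC, hp, rfl⟩
    exact ⟨_, ⟨⟨⟨φ, ψ, hleft, hright⟩, hφ, hψ, hC, hp⟩, rfl⟩, rfl⟩
  · rintro ⟨_, ⟨⟨e, he, he_symm, hC, hp⟩, rfl⟩, rfl⟩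
    exact ⟨e, e.symm, ⟨he, he_symm, e.left_inv, e.right_inv⟩, hC, hp, rfl⟩

lemma strictMono_of_image_subset_of_isLeast {f : ℝ → ℝ} (hf : Continuous f)
    (hf_inj : Function.Injective f) (hfC : f '' C ⊆ C) (hp : IsLeast C p) (hfp : f p = p)
    (hC : C.Nontrivial) : StrictMono f := by
  refine (hf.strictMono_of_inj hf_inj).resolve_right fun hanti => ?_
  obtain ⟨q, hqC, hqp⟩ := hC.exists_ne p
  have hfq : f q < f p := hanti (lt_of_le_of_ne (hp.2 hqC) hqp.symm)
  exact absurd (hp.2 (hfC (mem_image_of_mem f hqC))) (by rw [hfp] at hfq; exact not_le.2 hfq)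

end Stabilizer

lemma integral_interpolation (p q c : ℝ) (n : ℕ) :
    ∫ t in (0 : ℝ)..1, ((1 - t) ^ n * p + t ^ n * q + c * (t * (1 - t))) =
      (p + q) / (n + 1) + c / 6 := by
  have hreflect : ∫ t in (0 : ℝ)..1, (1 - t) ^ n = 1 / (n + 1) := by
    simp [intervalIntegral.integral_comp_sub_left (fun t : ℝ => t ^ n)]
  have hbump : ∫ t in (0 : ℝ)..1, t * (1 - t) = 1 / 6 := by
    simp only [mul_sub, mul_one, ← sq]
    rw [intervalIntegral.integral_sub (Continuous.intervalIntegrable (by fun_prop) _ _)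
      (Continuous.intervalIntegrable (by fun_prop) _ _)]
    norm_num
  rw [intervalIntegral.integral_add (Continuous.intervalIntegrable (by fun_prop) _ _)
      (Continuous.intervalIntegrable (by fun_prop) _ _),
    intervalIntegral.integral_add (Continuous.intervalIntegrable (by fun_prop) _ _)
      (Continuous.intervalIntegrable (by fun_prop) _ _),
    intervalIntegral.integral_mul_const, intervalIntegral.integral_mul_const,
    intervalIntegral.integral_const_mul, hreflect, hbump, integral_pow]
  norm_num
  ring

-- With large `n`, the weights `(1 - t) ^ n` and `t ^ n` join `p` to `q` at an arbitrarily small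
-- cost in area; the bump `t * (1 - t)` then makes up the missing area.
lemma exists_interpolation_coefficients {p q m : ℝ} (hp : 0 < p) (hq : 0 < q) (hm : 0 < m) :
    ∃ n : ℕ, n ≠ 0 ∧ ∃ c : ℝ, 0 < c ∧ (p + q) / (n + 1) + c / 6 = m := by
  obtain ⟨n, hn⟩ := exists_nat_gt ((p + q) / m)
  have hn_pos : (0 : ℝ) < n := lt_trans (by positivity) hn
  have hsmall : (p + q) / (n + 1) < m := by
    rw [div_lt_iff₀ hm] at hn
    rw [div_lt_iff₀ (by positivity)]
    linarith
  exact ⟨n, by exact_mod_cast hn_pos.ne', 6 * (m - (p + q) / (n + 1)), by linarith, by ring⟩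

lemma exists_continuous_ramp {a b : ℝ} (hab : a < b) :
    ∃ t : ℝ → ℝ, Continuous t ∧ (∀ x, t x ∈ Icc 0 1) ∧ (∀ x ≤ a, t x = 0) ∧ (∀ x, b ≤ x → t x = 1) ∧
      ∀ x ∈ Icc a b, t x = x / (b - a) - a / (b - a) := by
  have hw : 0 < b - a := sub_pos.2 hab
  refine ⟨fun x => max 0 (min 1 (x / (b - a) - a / (b - a))), by fun_prop,
    fun x => ⟨le_max_left _ _, max_le zero_le_one (min_le_left _ _)⟩, fun x hx => ?_,
    fun x hx => ?_, fun x hx => ?_⟩ <;> simp only [← sub_div]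
  · exact max_eq_left (min_le_of_right_le (div_nonpos_of_nonpos_of_nonneg (by linarith) hw.le))
  · rw [min_eq_left ((one_le_div hw).2 (by linarith)), max_eq_right zero_le_one]
  · rw [min_eq_right ((div_le_one hw).2 (by linarith [hx.2])),
      max_eq_right (div_nonneg (by linarith [hx.1]) hw.le)]

lemma exists_continuous_pos_eqOn_integral_eq {u v : ℝ → ℝ} (hu : Continuous u) (hv : Continuous v)
    (hu_pos : ∀ x, 0 < u x) (hv_pos : ∀ x, 0 < v x) {a b m : ℝ} (hab : a < b) (hm : 0 < m) :
    ∃ h : ℝ → ℝ, Continuous h ∧ (∀ x, 0 < h x) ∧ EqOn h u (Iic a) ∧ EqOn h v (Ici b) ∧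
      ∫ x in a..b, h x = m := by
  have hw : 0 < b - a := sub_pos.2 hab
  obtain ⟨t, ht, ht_mem, ht_left, ht_right, ht_mid⟩ := exists_continuous_ramp hab
  obtain ⟨n, hn, c, hc, harea⟩ :=
    exists_interpolation_coefficients (hu_pos a) (hv_pos b) (div_pos hm hw)
  refine ⟨fun x => (1 - t x) ^ n * u (min x a) + t x ^ n * v (max x b) + c * (t x * (1 - t x)),
    by fun_prop, fun x => ?_, fun x hx => ?_, fun x hx => ?_, ?_⟩
  · have ht_le : 0 ≤ 1 - t x := sub_nonneg.2 (ht_mem x).2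
    have := hu_pos (min x a)
    have := hv_pos (max x b)
    rcases (ht_mem x).1.eq_or_lt with h0 | h0
    · simpa [← h0, hn]
    · positivity
  · simp [ht_left x hx, hn, min_eq_left (mem_Iic.1 hx)]
  · simp [ht_right x hx, hn, max_eq_left (mem_Ici.1 hx)]
  · set P : ℝ → ℝ := fun s => (1 - s) ^ n * u a + s ^ n * v b + c * (s * (1 - s))
    calc ∫ x in a..b, ((1 - t x) ^ n * u (min x a) + t x ^ n * v (max x b) + c * (t x * (1 - t x)))
      _ = ∫ x in a..b, P (x / (b - a) - a / (b - a)) := by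
          refine intervalIntegral.integral_congr fun x hx => ?_
          rw [uIcc_of_le hab.le] at hx
          simp only [P, ht_mid x hx, min_eq_right hx.1, max_eq_right hx.2]
      _ = (b - a) * ∫ s in (0 : ℝ)..1, P s := by
          rw [intervalIntegral.integral_comp_div_sub P hw.ne', ← sub_div, ← sub_div, sub_self,
            zero_div, div_self hw.ne', smul_eq_mul]
      _ = m := by rw [integral_interpolation, harea, mul_div_cancel₀ m hw.ne']

/-- An increasing `C¹` diffeomorphism of `ℝ`, encoded without its inverse; the latter is recovered
in `IsIncreasingC1Diffeo.exists_perm`. -/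
structure IsIncreasingC1Diffeo (f : ℝ → ℝ) : Prop where
  contDiff : ContDiff ℝ 1 f
  deriv_pos : ∀ x, 0 < deriv f x
  surjective : Function.Surjective f

namespace IsIncreasingC1Diffeo

variable {f g : ℝ → ℝ}

lemma hasDerivAt (hf : IsIncreasingC1Diffeo f) (x : ℝ) : HasDerivAt f (deriv f x) x :=
  (hf.contDiff.differentiable one_ne_zero x).hasDerivAt

lemma continuous_deriv (hf : IsIncreasingC1Diffeo f) : Continuous (deriv f) :=
  hf.contDiff.continuous_deriv le_rfl

/-- The order automorphism of `ℝ` underlying an increasing `C¹` diffeomorphism. -/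
noncomputable def orderIso (hf : IsIncreasingC1Diffeo f) : ℝ ≃o ℝ :=
  (strictMono_of_deriv_pos hf.deriv_pos).orderIsoOfSurjective f hf.surjective

lemma exists_perm (hf : IsIncreasingC1Diffeo f) :
    ∃ e : Equiv.Perm ℝ, ⇑e = f ∧ ContDiff ℝ 1 e.symm :=
  ⟨hf.orderIso.toEquiv, rfl, hf.orderIso.toHomeomorph.contDiff_symm_deriv
    (fun x => (hf.deriv_pos x).ne') hf.hasDerivAt hf.contDiff⟩

lemma affine {c : ℝ} (hc : 0 < c) (d : ℝ) : IsIncreasingC1Diffeo fun x => c * x + d where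
  contDiff := by fun_prop
  deriv_pos x := by simpa
  surjective y := ⟨(y - d) / c, by field_simp; ring⟩

lemma exists_glue (hf : IsIncreasingC1Diffeo f) (hg : IsIncreasingC1Diffeo g) {a b : ℝ}
    (hab : a < b) (hfg : f a < g b) :
    ∃ F : ℝ → ℝ, IsIncreasingC1Diffeo F ∧ EqOn F f (Iic a) ∧ EqOn F g (Ici b) := by
  obtain ⟨h, hh, hh_pos, hhf, hhg, hh_int⟩ := exists_continuous_pos_eqOn_integral_eq
    hf.continuous_deriv hg.continuous_deriv hf.deriv_pos hg.deriv_pos hab (sub_pos.2 hfg)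
  set F : ℝ → ℝ := fun x => f a + ∫ s in a..x, h s
  have hF_deriv : ∀ x, HasDerivAt F (h x) x := fun x =>
    (hh.integral_hasStrictDerivAt a x).hasDerivAt.const_add (f a)
  have hF_contDiff : ContDiff ℝ 1 F := contDiff_one_iff_deriv.2
    ⟨fun x => (hF_deriv x).differentiableAt, by rwa [deriv_eq hF_deriv]⟩
  have hFf : EqOn F f (Iic a) := fun x hx => by
    have : ∫ s in a..x, h s = f x - f a := by
      rw [← intervalIntegral.integral_eq_sub_of_hasDerivAt (fun s _ => hf.hasDerivAt s)
        (hf.continuous_deriv.intervalIntegrable a x)]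
      exact intervalIntegral.integral_congr
        (hhf.mono (uIcc_of_ge (mem_Iic.1 hx) ▸ Icc_subset_Iic_self))
    simp only [F, this, add_sub_cancel]
  have hFg : EqOn F g (Ici b) := fun x hx => by
    have : ∫ s in b..x, h s = g x - g b := by
      rw [← intervalIntegral.integral_eq_sub_of_hasDerivAt (fun s _ => hg.hasDerivAt s)
        (hg.continuous_deriv.intervalIntegrable b x)]
      exact intervalIntegral.integral_congr
        (hhg.mono (uIcc_of_le (mem_Ici.1 hx) ▸ Icc_subset_Ici_self))
    simp only [F]
    rw [← intervalIntegral.integral_add_adjacent_intervals (hh.intervalIntegrable a b)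
      (hh.intervalIntegrable b x), hh_int, this]
    ring
  refine ⟨F, ⟨hF_contDiff, fun x => (hF_deriv x).deriv.symm ▸ hh_pos x, ?_⟩, hFf, hFg⟩
  refine hF_contDiff.continuous.surjective ?_ ?_
  · exact hg.orderIso.tendsto_atTop.congr'
      (hFg.symm.eventuallyEq_of_mem (Ici_mem_atTop b))
  · exact hf.orderIso.tendsto_atBot.congr'
      (hFf.symm.eventuallyEq_of_mem (Iic_mem_atBot a))

end IsIncreasingC1Diffeo

/-- `(a, b)` is a gap of `C`: a bounded component of the complement, with endpoints in `C`. -/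
structure IsGap (C : Set ℝ) (a b : ℝ) : Prop where
  left_mem : a ∈ C
  right_mem : b ∈ C
  lt : a < b
  notMem : ∀ x ∈ C, x ∉ Ioo a b

namespace IsGap

variable {C : Set ℝ} {a b : ℝ} {f : ℝ → ℝ}

lemma image (h : IsGap C a b) (hf : StrictMono f) :
    IsGap (f '' C) (f a) (f b) where
  left_mem := mem_image_of_mem f h.left_mem
  right_mem := mem_image_of_mem f h.right_mem
  lt := hf h.lt
  notMem := by
    rintro _ ⟨x, hx, rfl⟩ ⟨hax, hxb⟩
    exact h.notMem x hx ⟨hf.lt_iff_lt.1 hax, hf.lt_iff_lt.1 hxb⟩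

lemma of_mapsTo (h : IsGap C (f a) (f b)) (hf : StrictMono f) (hfC : MapsTo f C C) (ha : a ∈ C)
    (hb : b ∈ C) : IsGap C a b where
  left_mem := ha
  right_mem := hb
  lt := hf.lt_iff_lt.1 h.lt
  notMem x hx hxab := h.notMem (f x) (hfC hx) ⟨hf hxab.1, hf hxab.2⟩

end IsGap

lemma tendsto_slope_of_hasStrictDerivAt {𝕜 ι : Type*} [NontriviallyNormedField 𝕜] {f : 𝕜 → 𝕜}
    {f' x : 𝕜} (hf : HasStrictDerivAt f f' x) {L : Filter ι} {a b : ι → 𝕜}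
    (ha : Tendsto a L (𝓝 x)) (hb : Tendsto b L (𝓝 x)) (hab : ∀ i, a i ≠ b i) :
    Tendsto (fun i => (f (b i) - f (a i)) / (b i - a i)) L (𝓝 f') := by
  have hlittle := (hf.hasStrictFDerivAt.isLittleO.comp_tendsto
    (hb.prodMk_nhds ha)).tendsto_div_nhds_zero
  rw [← tendsto_sub_nhds_zero_iff]
  refine hlittle.congr fun i => ?_
  have : b i - a i ≠ 0 := sub_ne_zero.2 (hab i).symm
  simp only [Function.comp_apply, ContinuousLinearMap.toSpanSingleton_apply, smul_eq_mul]
  field_simp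

lemma exists_zpow_eq_of_tendsto {ι : Type*} {L : Filter ι} [L.NeBot] {l d : ℝ} (hl : 1 < l)
    (hd : 0 < d) {k : ι → ℤ} (h : Tendsto (fun i => l ^ k i) L (𝓝 d)) : ∃ m : ℤ, l ^ m = d := by
  have hlog : 0 < Real.log l := Real.log_pos hl
  have hlim : Tendsto (fun i => (k i : ℝ)) L (𝓝 (Real.log d / Real.log l)) := by
    refine ((h.log hd.ne').div_const (Real.log l)).congr fun i => ?_
    rw [Real.log_zpow, mul_div_cancel_right₀ _ hlog.ne']
  obtain ⟨m, hm⟩ : Real.log d / Real.log l ∈ range ((↑) : ℤ → ℝ) :=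
    Int.isClosedEmbedding_coe_real.isClosed_range.mem_of_tendsto hlim
      (Eventually.of_forall fun i => mem_range_self (k i))
  rw [eq_div_iff hlog.ne', ← Real.log_zpow] at hm
  exact ⟨m, Real.log_injOn_pos (mem_Ioi.2 (by positivity)) hd hm⟩

lemma image_eq_of_comp_eqOn {α : Type*} {s : Set α} {S₀ S₁ f : α → α} (hs : s = S₀ '' s ∪ S₁ '' s)
    (h₀₀ : EqOn (f ∘ S₀ ∘ S₀) S₀ s) (h₀₁ : EqOn (f ∘ S₀ ∘ S₁) (S₁ ∘ S₀) s)
    (h₁ : EqOn (f ∘ S₁) (S₁ ∘ S₁) s) : f '' s = s := by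
  calc f '' s
    _ = f '' (S₀ '' (S₀ '' s ∪ S₁ '' s) ∪ S₁ '' s) := by rw [← hs, ← hs]
    _ = (f ∘ S₀ ∘ S₀) '' s ∪ (f ∘ S₀ ∘ S₁) '' s ∪ (f ∘ S₁) '' s := by
      simp only [image_union, image_comp]
    _ = S₀ '' s ∪ S₁ '' (S₀ '' s ∪ S₁ '' s) := by
      rw [h₀₀.image_eq, h₀₁.image_eq, h₁.image_eq, image_union, union_assoc, image_comp, image_comp]
    _ = s := by rw [← hs, ← hs]

lemma exists_isIncreasingC1Diffeo_affine_pieces {l : ℝ} (hl : 2 < l) :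
    ∃ F : ℝ → ℝ, IsIncreasingC1Diffeo F ∧ EqOn F (fun x => l * x) (Iic (1 / l ^ 2)) ∧
      EqOn F (fun x => x + ((l - 1) / l) ^ 2) (Icc ((l - 1) / l ^ 2) (1 / l)) ∧
      EqOn F (fun x => (x + (l - 1)) / l) (Ici ((l - 1) / l)) := by
  have hl_pos : 0 < l := by linarith
  obtain ⟨G, hG, hG_left, hG_right⟩ :=
    (IsIncreasingC1Diffeo.affine hl_pos 0).exists_glue
      (IsIncreasingC1Diffeo.affine one_pos (((l - 1) / l) ^ 2))
      (show 1 / l ^ 2 < (l - 1) / l ^ 2 by gcongr; linarith) (by field_simp; nlinarith)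
  have hG_mid : EqOn G (fun x => x + ((l - 1) / l) ^ 2) (Ici ((l - 1) / l ^ 2)) := fun x hx => by
    simpa only [one_mul] using hG_right hx
  have hmid_nonempty : (l - 1) / l ^ 2 ≤ 1 / l := by field_simp; linarith
  obtain ⟨F, hF, hFG, hF_right⟩ :=
    hG.exists_glue (IsIncreasingC1Diffeo.affine (one_div_pos.2 hl_pos) ((l - 1) / l))
      (show 1 / l < (l - 1) / l by gcongr; linarith)
      (by rw [hG_mid (mem_Ici.2 hmid_nonempty)]; field_simp; nlinarith)
  refine ⟨F, hF, fun x hx => ?_, fun x hx => ?_, fun x hx => ?_⟩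
  · have hxl : x ≤ 1 / l := hx.trans (one_div_le_one_div_of_le hl_pos (by nlinarith))
    rw [hFG hxl, hG_left hx]
    exact add_zero _
  · rw [hFG hx.2, hG_mid hx.1]
  · rw [hF_right hx]
    ring

namespace IsCentralCantor

variable {l : ℝ} {C : Set ℝ}

lemma div_mem (hC : IsCentralCantor l C) {x : ℝ} (hx : x ∈ C) : x / l ∈ C := by
  rw [hC.2.2]
  exact Or.inl (mem_image_of_mem _ hx)

lemma add_div_mem (hC : IsCentralCantor l C) {x : ℝ} (hx : x ∈ C) : (x + (l - 1)) / l ∈ C := by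
  rw [hC.2.2, add_div]
  exact Or.inr ⟨x, hx, rfl⟩

lemma exists_eq (hC : IsCentralCantor l C) {x : ℝ} (hx : x ∈ C) :
    ∃ c ∈ C, x = c / l ∨ x = (c + (l - 1)) / l := by
  rw [hC.2.2] at hx
  rcases hx with ⟨c, hc, rfl⟩ | ⟨c, hc, rfl⟩
  · exact ⟨c, hc, Or.inl rfl⟩
  · exact ⟨c, hc, Or.inr (add_div c (l - 1) l).symm⟩

lemma isLeast_zero (hC : IsCentralCantor l C) (hl : 1 < l) : IsLeast C 0 := by
  have hl_pos : 0 < l := by linarith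
  obtain ⟨m, hm, hm_le⟩ := hC.1.exists_isLeast hC.2.1
  have hm_nonpos : m ≤ 0 := by
    have := hm_le (hC.div_mem hm)
    rw [le_div_iff₀ hl_pos] at this
    nlinarith
  have hm_nonneg : 0 ≤ m := by
    obtain ⟨c, hc, h | h⟩ := hC.exists_eq hm <;>
    · have := hm_le hc
      rw [eq_div_iff hl_pos.ne'] at h
      nlinarith
  exact le_antisymm hm_nonpos hm_nonneg ▸ ⟨hm, hm_le⟩

lemma isGreatest_one (hC : IsCentralCantor l C) (hl : 1 < l) : IsGreatest C 1 := by
  have hl_pos : 0 < l := by linarith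
  obtain ⟨m, hm, hm_ge⟩ := hC.1.exists_isGreatest hC.2.1
  have hm_ge_one : 1 ≤ m := by
    have := hm_ge (hC.add_div_mem hm)
    rw [div_le_iff₀ hl_pos] at this
    nlinarith
  have hm_le_one : m ≤ 1 := by
    obtain ⟨c, hc, h | h⟩ := hC.exists_eq hm <;>
    · have := hm_ge hc
      rw [eq_div_iff hl_pos.ne'] at h
      nlinarith
  exact le_antisymm hm_le_one hm_ge_one ▸ ⟨hm, hm_ge⟩

lemma mem_Icc (hC : IsCentralCantor l C) (hl : 1 < l) {x : ℝ} (hx : x ∈ C) : x ∈ Icc 0 1 :=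
  ⟨(hC.isLeast_zero hl).2 hx, (hC.isGreatest_one hl).2 hx⟩

lemma nontrivial (hC : IsCentralCantor l C) (hl : 1 < l) : C.Nontrivial :=
  ⟨0, (hC.isLeast_zero hl).1, 1, (hC.isGreatest_one hl).1, zero_ne_one⟩

lemma isGap_center (hC : IsCentralCantor l C) (hl : 2 < l) : IsGap C (1 / l) ((l - 1) / l) where
  left_mem := hC.div_mem (hC.isGreatest_one (by linarith)).1
  right_mem := by simpa using hC.add_div_mem (hC.isLeast_zero (by linarith)).1
  lt := by gcongr; linarith
  notMem x hx hx_mem := by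
    have : 0 < l := by linarith
    obtain ⟨c, hc, rfl | rfl⟩ := hC.exists_eq hx
    · exact absurd hx_mem.1 (not_lt.2 (by gcongr; exact (hC.mem_Icc (by linarith) hc).2))
    · refine absurd hx_mem.2 (not_lt.2 ?_)
      gcongr
      linarith [(hC.mem_Icc (by linarith) hc).1]

lemma isGap_div (hC : IsCentralCantor l C) (hl : 2 < l) {a b : ℝ} (h : IsGap C a b) :
    IsGap C (a / l) (b / l) where
  left_mem := hC.div_mem h.left_mem
  right_mem := hC.div_mem h.right_mem
  lt := by have := h.lt; gcongr
  notMem x hx hx_mem := by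
    have hl_pos : 0 < l := by linarith
    obtain ⟨c, hc, rfl | rfl⟩ := hC.exists_eq hx
    · exact h.notMem c hc
        ⟨(div_lt_div_iff_of_pos_right hl_pos).1 hx_mem.1,
          (div_lt_div_iff_of_pos_right hl_pos).1 hx_mem.2⟩
    · have := (div_lt_div_iff_of_pos_right hl_pos).1 hx_mem.2
      linarith [(hC.mem_Icc (by linarith) hc).1, (hC.mem_Icc (by linarith) h.right_mem).2]

lemma isGap_pow (hC : IsCentralCantor l C) (hl : 2 < l) (n : ℕ) :
    IsGap C (1 / l / l ^ n) ((l - 1) / l / l ^ n) := by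
  induction n with
  | zero => simpa using hC.isGap_center hl
  | succ n ih => simpa only [pow_succ, ← div_div] using hC.isGap_div hl ih

lemma eq_of_isGap_of_le_of_le (hC : IsCentralCantor l C) (hl : 2 < l) {a b : ℝ} (h : IsGap C a b)
    (ha : a ≤ 1 / l) (hb : (l - 1) / l ≤ b) : a = 1 / l ∧ b = (l - 1) / l := by
  have hcenter := hC.isGap_center hl
  refine ⟨ha.eq_of_not_lt fun hlt => h.notMem _ hcenter.left_mem ⟨hlt, hcenter.lt.trans_le hb⟩,
    (hb.eq_of_not_lt fun hlt => h.notMem _ hcenter.right_mem ⟨ha.trans_lt hcenter.lt, hlt⟩).symm⟩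

lemma sub_eq_or_exists_isGap (hC : IsCentralCantor l C) (hl : 2 < l) {a b : ℝ} (h : IsGap C a b) :
    b - a = (l - 2) / l ∨ ∃ c d, IsGap C c d ∧ b - a = (d - c) / l := by
  have hl_pos : 0 < l := by linarith
  obtain ⟨c, hc, rfl | rfl⟩ := hC.exists_eq h.left_mem <;>
    obtain ⟨d, hd, rfl | rfl⟩ := hC.exists_eq h.right_mem
  · exact Or.inr ⟨c, d, h.of_mapsTo (f := (· / l)) (strictMono_div_right_of_pos hl_pos)
      (fun x hx => hC.div_mem hx) hc hd, by ring⟩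
  · obtain ⟨ha, hb⟩ := hC.eq_of_isGap_of_le_of_le hl h
      (by gcongr; exact (hC.mem_Icc (by linarith) hc).2)
      (by gcongr; linarith [(hC.mem_Icc (by linarith) hd).1])
    exact Or.inl (by rw [ha, hb]; ring)
  · have := (div_lt_div_iff_of_pos_right hl_pos).1 h.lt
    linarith [(hC.mem_Icc (by linarith) hc).1, (hC.mem_Icc (by linarith) hd).2]
  · exact Or.inr ⟨c, d, h.of_mapsTo (f := fun x => (x + (l - 1)) / l)
      (fun x y hxy => div_lt_div_of_pos_right (by linarith) hl_pos)
      (fun x hx => hC.add_div_mem hx) hc hd, by ring⟩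

lemma exists_sub_eq_of_isGap (hC : IsCentralCantor l C) (hl : 2 < l) {a b : ℝ} (h : IsGap C a b) :
    ∃ k : ℤ, b - a = (l - 2) * l ^ k := by
  have hl_pos : 0 < l := by linarith
  have hlong : ∀ (n : ℕ) {a b : ℝ}, IsGap C a b → 1 < (b - a) * l ^ n →
      ∃ k : ℤ, b - a = (l - 2) * l ^ k := by
    intro n
    induction n with
    | zero =>
      intro a b h hlen
      linarith [(hC.mem_Icc (by linarith) h.left_mem).1, (hC.mem_Icc (by linarith) h.right_mem).2]
    | succ n ih =>
      intro a b h hlen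
      rcases hC.sub_eq_or_exists_isGap hl h with hab | ⟨c, d, hcd, hab⟩
      · exact ⟨-1, by rw [hab, zpow_neg_one, div_eq_mul_inv]⟩
      · obtain ⟨k, hk⟩ := ih hcd (by
          rwa [hab, pow_succ', ← mul_assoc, div_mul_cancel₀ _ hl_pos.ne'] at hlen)
        exact ⟨k - 1, by rw [hab, hk, zpow_sub_one₀ hl_pos.ne', div_eq_mul_inv, mul_assoc]⟩
  obtain ⟨n, hn⟩ := pow_unbounded_of_one_lt (1 / (b - a)) (by linarith : 1 < l)
  exact hlong n h (by rwa [div_lt_iff₀' (sub_pos.2 h.lt)] at hn)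

lemma exists_div_eq_of_isGap (hC : IsCentralCantor l C) (hl : 2 < l) {a b c d : ℝ}
    (h : IsGap C a b) (h' : IsGap C c d) : ∃ k : ℤ, (b - a) / (d - c) = l ^ k := by
  obtain ⟨i, hi⟩ := hC.exists_sub_eq_of_isGap hl h
  obtain ⟨j, hj⟩ := hC.exists_sub_eq_of_isGap hl h'
  refine ⟨i - j, ?_⟩
  rw [hi, hj, zpow_sub₀ (by linarith), mul_div_mul_left _ _ (by linarith)]

lemma exists_zpow_eq_deriv (hC : IsCentralCantor l C) (hl : 2 < l) {f : ℝ → ℝ} {d : ℝ}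
    (hf : StrictMono f) (hfC : f '' C = C) (hfd : HasStrictDerivAt f d 0) (hd : d ≠ 0) :
    ∃ k : ℤ, l ^ k = d := by
  have hgap := hC.isGap_pow hl
  choose k hk using fun n => hC.exists_div_eq_of_isGap hl (hfC ▸ (hgap n).image hf) (hgap n)
  have hzero : ∀ c : ℝ, Tendsto (fun n : ℕ => c / l ^ n) atTop (𝓝 0) := fun c =>
    tendsto_const_nhds.div_atTop (tendsto_pow_atTop_atTop_of_one_lt (by linarith))
  have hlim := tendsto_slope_of_hasStrictDerivAt hfd (hzero _) (hzero _) fun n => (hgap n).lt.ne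
  exact exists_zpow_eq_of_tendsto (by linarith)
    ((hfd.hasDerivAt.nonneg_of_monotone hf.monotone).lt_of_ne' hd) (hlim.congr hk)

lemma exists_isIncreasingC1Diffeo_image_eq (hC : IsCentralCantor l C) (hl : 2 < l) :
    ∃ F : ℝ → ℝ, IsIncreasingC1Diffeo F ∧ F '' C = C ∧ F 0 = 0 ∧ deriv F 0 = l := by
  have hl_pos : 0 < l := by linarith
  have hC_Icc : ∀ c ∈ C, c ∈ Icc 0 1 := fun c hc => hC.mem_Icc (by linarith) hc
  obtain ⟨F, hF, hleft, hmid, hright⟩ := exists_isIncreasingC1Diffeo_affine_pieces hl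
  have hF_image : F '' C = C := by
    refine image_eq_of_comp_eqOn (S₀ := (· / l)) (S₁ := fun x => (x + (l - 1)) / l)
      (by simpa only [add_div] using hC.2.2) (fun c hc => ?_) (fun c hc => ?_) (fun c hc => ?_) <;>
      simp only [Function.comp_apply]
    · rw [hleft (by rw [mem_Iic, div_div, ← sq]; gcongr; exact (hC_Icc c hc).2)]
      exact mul_div_cancel₀ _ hl_pos.ne'
    · rw [hmid ⟨by rw [div_div, ← sq]; gcongr; linarith [(hC_Icc c hc).1],
        by gcongr; exact (hC_Icc _ (hC.add_div_mem hc)).2⟩]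
      field_simp
      ring
    · exact hright (mem_Ici.2 (by gcongr; linarith [(hC_Icc c hc).1]))
  have hF_deriv : deriv F 0 = l := by
    rw [(hleft.eventuallyEq_of_mem (Iic_mem_nhds (by positivity))).deriv_eq]
    simp
  exact ⟨F, hF, hF_image, (hleft (mem_Iic.2 (by positivity))).trans (mul_zero l), hF_deriv⟩

lemma range_derivHom (hC : IsCentralCantor l C) (hl : 2 < l) :
    (derivHom C 0).range = Subgroup.zpowers (Units.mk0 l (two_pos.trans hl).ne') := by
  refine le_antisymm ?_ (Subgroup.zpowers_le.2 ?_)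
  · rintro _ ⟨⟨e, he⟩, rfl⟩
    have ⟨he_contDiff, _, he_image, he_zero⟩ := he
    have he_mono : StrictMono e :=
      strictMono_of_image_subset_of_isLeast he_contDiff.continuous e.injective he_image.subset
        (hC.isLeast_zero (by linarith)) he_zero (hC.nontrivial (by linarith))
    obtain ⟨k, hk⟩ := hC.exists_zpow_eq_deriv hl he_mono he_image
      (hasStrictDerivAt_of_mem_c1Stabilizer he 0) (derivHom C 0 ⟨e, he⟩).ne_zero
    exact ⟨k, Units.ext (by
      simpa only [Units.val_zpow_eq_zpow_val, Units.val_mk0, coe_derivHom] using hk)⟩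
  · obtain ⟨F, hF, hF_image, hF_zero, hF_deriv⟩ := hC.exists_isIncreasingC1Diffeo_image_eq hl
    obtain ⟨e, rfl, he_symm⟩ := hF.exists_perm
    exact ⟨⟨e, hF.contDiff, he_symm, hF_image, hF_zero⟩, Units.ext hF_deriv⟩

end IsCentralCantor

/-- For the central Cantor set `C_λ` (λ > 2), the group of derivatives at `0` of
`C¹` diffeomorphisms of ℝ preserving `C_λ` and fixing `0` is exactly `⟨λ⟩ = {λ^k}`. -/
theorem derivStab_centralCantor (l : ℝ) (hl : 2 < l) (C : Set ℝ)
    (hC : IsCentralCantor l C) :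
    {d : ℝ | ∃ φ ψ : ℝ → ℝ, IsC1DiffeoPair φ ψ ∧ φ '' C = C ∧ φ 0 = 0 ∧
        deriv φ 0 = d}
      = {x : ℝ | ∃ k : ℤ, x = l ^ k} := by
  ext d
  calc d ∈ {d : ℝ | ∃ φ ψ : ℝ → ℝ, IsC1DiffeoPair φ ψ ∧ φ '' C = C ∧ φ 0 = 0 ∧ deriv φ 0 = d}
    _ ↔ ∃ v ∈ (derivHom C 0).range, (v : ℝ) = d := exists_isC1DiffeoPair_iff_mem_range_derivHom d
    _ ↔ ∃ k : ℤ, l ^ k = d := by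
      simp only [hC.range_derivHom hl, Subgroup.exists_mem_zpowers, Units.val_zpow_eq_zpow_val,
        Units.val_mk0]
    _ ↔ d ∈ {x : ℝ | ∃ k : ℤ, x = l ^ k} := exists_congr fun _ => eq_comm
end

section
/- Let (Φ, M) be a contractive invertible IFS with n+1 maps whose strict attractive basin M is an interval [0,1], with the maps φ_j orientation-preserving C¹ diffeomorphisms onto their images. Then the group of homeomorphisms of the attractor Cantor set C_Φ induced by orientation-preserving C¹ diffeomorphisms of M preserving C_Φ contains a subgroup isomorphic to Thompson's group F_{n+1}. -/
open Set Filter Topology Asymptotics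

/-- An element of the Higman–Thompson group `F_p`: a piecewise linear
orientation-preserving homeomorphism of `[0,1]` with finitely many breakpoints, all
in `ℤ[1/p]`, and slopes integer powers of `p`. -/
def IsHigmanThompson (p : ℕ) (f : ℝ → ℝ) : Prop :=
  f 0 = 0 ∧ f 1 = 1 ∧ StrictMonoOn f (Set.Icc 0 1) ∧
  ∃ (m : ℕ) (x : ℕ → ℝ), 0 < m ∧ x 0 = 0 ∧ x m = 1 ∧
    (∀ i < m, x i < x (i + 1)) ∧
    (∀ i ≤ m, ∃ (a : ℤ) (e : ℕ), x i = (a : ℝ) / (p : ℝ) ^ e) ∧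
    (∀ i < m, ∃ k : ℤ, ∀ t ∈ Set.Icc (x i) (x (i + 1)),
      f t = f (x i) + (p : ℝ) ^ k * (t - x i))

/-!
A point of the attractor `C` and a point of `[0, 1)` are both coded by words: `C` through the maps
of the IFS, `[0, 1)` through base `p` expansions, where `p = n + 1`. An element `f` of `F_p` maps
each base `p` interval of a sufficiently deep level affinely onto another base `p` interval, so on
codes it replaces the prefixes `w` of a fixed length by words `V w`. The same replacement on codes
of `C` is given by the maps `e_(V w) ∘ e_w⁻¹`, which are `C¹` diffeomorphisms on pairwise disjoint
intervals. Since `f` is increasing, they keep these intervals in order, so they can be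
interpolated across the gaps to a single `C¹` diffeomorphism of `ℝ`. A prefix replacement
determines, and is determined by, its action on either coded set, which makes the realization
multiplicative and injective.
-/

/-! ### Gluing `C¹` diffeomorphisms of the line -/

/-- The group of `C¹` diffeomorphisms of `ℝ` with `C¹` inverse; orientation is preserved because
its elements are order isomorphisms. -/
def c1Diffeo : Subgroup (ℝ ≃o ℝ) where
  carrier := {e | ContDiff ℝ 1 e ∧ ContDiff ℝ 1 e.symm}
  mul_mem' he hf := ⟨he.1.comp hf.1, hf.2.comp he.2⟩
  one_mem' := ⟨contDiff_id, contDiff_id⟩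
  inv_mem' he := ⟨he.2, he.1⟩

lemma isC1DiffeoPair_of_mem_c1Diffeo {e : ℝ ≃o ℝ} (he : e ∈ c1Diffeo) :
    IsC1DiffeoPair e e.symm :=
  ⟨he.1, he.2, e.left_inv, e.right_inv⟩

lemma deriv_pos_of_mem_c1Diffeo {e : ℝ ≃o ℝ} (he : e ∈ c1Diffeo) (x : ℝ) : 0 < deriv e x := by
  have hchain : HasDerivAt (e.symm ∘ e) (deriv e.symm (e x) * deriv e x) x :=
    (he.2.differentiable one_ne_zero _).hasDerivAt.comp x
      (he.1.differentiable one_ne_zero x).hasDerivAt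
  have hone : deriv e.symm (e x) * deriv e x = 1 := by
    rw [← hchain.deriv, funext e.symm_apply_apply (f := e.symm ∘ e) (g := id), deriv_id]
  exact e.monotone.deriv_nonneg.lt_of_ne' (right_ne_zero_of_mul_eq_one hone)

lemma exists_mem_c1Diffeo_coe_eq {F : ℝ → ℝ} (hF : ContDiff ℝ 1 F) (hpos : ∀ x, 0 < deriv F x)
    (hbot : Tendsto F atBot atBot) (htop : Tendsto F atTop atTop) :
    ∃ e ∈ c1Diffeo, ⇑e = F :=
  let e := (strictMono_of_deriv_pos hpos).orderIsoOfSurjective F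
    (hF.continuous.surjective htop hbot)
  ⟨e, ⟨hF, e.toHomeomorph.contDiff_symm_deriv (fun x => (hpos x).ne')
    (fun x => (hF.differentiable one_ne_zero x).hasDerivAt) hF⟩, rfl⟩

lemma exists_mem_c1Diffeo_coe_eq_of_le_deriv {F : ℝ → ℝ} (hF : ContDiff ℝ 1 F) {m : ℝ} (hm : 0 < m)
    (hle : ∀ x, m ≤ deriv F x) : ∃ e ∈ c1Diffeo, ⇑e = F := by
  have hgrowth := mul_sub_le_image_sub_of_le_deriv (hF.differentiable one_ne_zero) hle
  refine exists_mem_c1Diffeo_coe_eq hF (fun x => hm.trans_le (hle x)) ?_ ?_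
  · refine tendsto_atBot_mono' _ ?_
      (tendsto_atBot_add_const_left _ (F 0) (tendsto_id.const_mul_atBot hm))
    filter_upwards [Iic_mem_atBot 0] with x hx
    have := hgrowth (mem_Iic.1 hx)
    simp only [id]
    linarith
  · refine tendsto_atTop_mono' _ ?_
      (tendsto_atTop_add_const_left _ (F 0) (tendsto_id.const_mul_atTop hm))
    filter_upwards [Ici_mem_atTop 0] with x hx
    have := hgrowth (mem_Ici.1 hx)
    simp only [id]
    linarith

lemma hasDerivAt_const_add_integral {u : ℝ → ℝ} (hu : Continuous u) (c a x : ℝ) :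
    HasDerivAt (fun y => c + ∫ t in a..y, u t) (u x) x :=
  (hu.integral_hasStrictDerivAt a x).hasDerivAt.const_add c

lemma deriv_const_add_integral {u : ℝ → ℝ} (hu : Continuous u) (c a : ℝ) :
    deriv (fun y => c + ∫ t in a..y, u t) = u :=
  funext fun x => (hasDerivAt_const_add_integral hu c a x).deriv

lemma contDiff_one_const_add_integral {u : ℝ → ℝ} (hu : Continuous u) (c a : ℝ) :
    ContDiff ℝ 1 (fun y => c + ∫ t in a..y, u t) :=
  contDiff_one_iff_deriv.2 ⟨fun x => (hasDerivAt_const_add_integral hu c a x).differentiableAt,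
    by rwa [deriv_const_add_integral hu]⟩

lemma integral_eq_sub_of_eqOn_deriv {f u : ℝ → ℝ} (hf : ContDiff ℝ 1 f) {a b : ℝ}
    (hu : EqOn u (deriv f) (uIcc a b)) : ∫ t in a..b, u t = f b - f a := by
  rw [intervalIntegral.integral_congr hu]
  exact intervalIntegral.integral_deriv_eq_sub' f rfl
    (fun x _ => hf.differentiable one_ne_zero x) (hf.continuous_deriv le_rfl).continuousOn

lemma exists_mem_c1Diffeo_eqOn_Icc {f : ℝ → ℝ} {a b : ℝ} (hab : a < b)
    (hf : ContDiffOn ℝ 1 f (Icc a b)) (hpos : ∀ x ∈ Icc a b, 0 < derivWithin f (Icc a b) x) :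
    ∃ e ∈ c1Diffeo, EqOn e f (Icc a b) := by
  have hcont : ContinuousOn (derivWithin f (Icc a b)) (Icc a b) :=
    hf.continuousOn_derivWithin (uniqueDiffOn_Icc hab) le_rfl
  obtain ⟨x₀, hx₀, hmin⟩ := isCompact_Icc.exists_isMinOn (nonempty_Icc.2 hab.le) hcont
  set u : ℝ → ℝ := IccExtend hab.le ((Icc a b).domRestrict (derivWithin f (Icc a b)))
  have hu : Continuous u := hcont.domRestrict.Icc_extend'
  obtain ⟨e, he, he_eq⟩ := exists_mem_c1Diffeo_coe_eq_of_le_deriv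
    (contDiff_one_const_add_integral hu (f a) a) (hpos x₀ hx₀) fun x => by
      rw [deriv_const_add_integral hu]
      exact hmin (projIcc a b hab.le x).2
  refine ⟨e, he, fun x hx => ?_⟩
  have hsub : Icc a x ⊆ Icc a b := Icc_subset_Icc_right hx.2
  have hderiv : ∀ y ∈ Ioo a x, HasDerivAt f (u y) y := fun y hy => by
    have hy' : y ∈ Icc a b := hsub (Ioo_subset_Icc_self hy)
    rw [show u y = derivWithin f (Icc a b) y from IccExtend_of_mem _ _ hy']
    exact ((hf.differentiableOn one_ne_zero y hy').hasDerivWithinAt).hasDerivAt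
      (Icc_mem_nhds hy.1 (hy.2.trans_le hx.2))
  rw [he_eq]
  simp only [intervalIntegral.integral_eq_sub_of_hasDerivAt_of_le hx.1
    (hf.continuousOn.mono hsub) hderiv (hu.intervalIntegrable a x), add_sub_cancel]

/- High powers carry the prescribed end values with arbitrarily small integral; a multiple of
`(x - a) * (b - x)` makes up the difference. -/
lemma exists_continuous_pos_integral_eq {a b s t D : ℝ} (hab : a < b) (hs : 0 < s) (ht : 0 < t)
    (hD : 0 < D) : ∃ v : ℝ → ℝ, Continuous v ∧ (∀ x ∈ Icc a b, 0 < v x) ∧ v a = s ∧ v b = t ∧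
      ∫ x in a..b, v x = D := by
  have hL : 0 < b - a := sub_pos.2 hab
  obtain ⟨m, hm⟩ := exists_nat_gt ((s + t) * (b - a) / D)
  have hm_pos : (0 : ℝ) < m := lt_trans (by positivity) hm
  have hm_ne : m ≠ 0 := by exact_mod_cast hm_pos.ne'
  set w : ℝ → ℝ := fun x => s * ((b - x) / (b - a)) ^ m + t * ((x - a) / (b - a)) ^ m
  set k : ℝ → ℝ := fun x => (x - a) * (b - x)
  have hw : Continuous w := by fun_prop
  have hk : Continuous k := by fun_prop
  have hw_int : ∫ x in a..b, w x = (s + t) * (b - a) / (m + 1) := by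
    simp only [w, div_pow]
    rw [intervalIntegral.integral_add (Continuous.intervalIntegrable (by fun_prop) a b)
      (Continuous.intervalIntegrable (by fun_prop) a b), intervalIntegral.integral_const_mul,
      intervalIntegral.integral_const_mul, intervalIntegral.integral_div,
      intervalIntegral.integral_div, intervalIntegral.integral_comp_sub_left (fun x => x ^ m),
      intervalIntegral.integral_comp_sub_right (fun x => x ^ m), sub_self, sub_self, integral_pow,
      zero_pow m.succ_ne_zero, sub_zero, pow_succ]
    field_simp
  have hw_lt : ∫ x in a..b, w x < D := by
    rw [hw_int, div_lt_iff₀ (by positivity)]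
    rw [div_lt_iff₀ hD] at hm
    linarith
  have hk_int : 0 < ∫ x in a..b, k x :=
    intervalIntegral.intervalIntegral_pos_of_pos_on (hk.intervalIntegrable a b)
      (fun x hx => mul_pos (sub_pos.2 hx.1) (sub_pos.2 hx.2)) hab
  set η := (D - ∫ x in a..b, w x) / ∫ x in a..b, k x
  have hη : 0 < η := div_pos (sub_pos.2 hw_lt) hk_int
  refine ⟨fun x => w x + η * k x, by fun_prop, fun x hx => ?_, ?_, ?_, ?_⟩
  · have hxa : 0 ≤ x - a := sub_nonneg.2 hx.1
    have hbx : 0 ≤ b - x := sub_nonneg.2 hx.2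
    have hwx : 0 < w x := by
      simp only [w]
      rcases hxa.eq_or_lt with h | h
      · have hbx' : 0 < b - x := by linarith
        positivity
      · positivity
    exact add_pos_of_pos_of_nonneg hwx (mul_nonneg hη.le (mul_nonneg hxa hbx))
  · simp [w, k, hL.ne', hm_ne]
  · simp [w, k, hL.ne', hm_ne]
  · rw [intervalIntegral.integral_add (hw.intervalIntegrable a b)
      (Continuous.intervalIntegrable (by fun_prop) a b), intervalIntegral.integral_const_mul,
      div_mul_cancel₀ _ hk_int.ne', add_sub_cancel]

lemma exists_continuous_pos_eqOn_Iic_Ici {f g : ℝ → ℝ} (hf : Continuous f) (hg : Continuous g)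
    (hf_pos : ∀ x, 0 < f x) (hg_pos : ∀ x, 0 < g x) {a b D : ℝ} (hab : a < b) (hD : 0 < D) :
    ∃ u : ℝ → ℝ, Continuous u ∧ (∀ x, 0 < u x) ∧ EqOn u f (Iic a) ∧ EqOn u g (Ici b) ∧
      ∫ x in a..b, u x = D := by
  obtain ⟨v, hv, hv_pos, hva, hvb, hv_int⟩ :=
    exists_continuous_pos_integral_eq hab (hf_pos a) (hg_pos b) hD
  set u : ℝ → ℝ := fun x => if x ≤ a then f x else if x ≤ b then v x else g x
  have hu_left : EqOn u f (Iic a) := fun x hx => if_pos hx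
  have hu_mid : EqOn u v (Icc a b) := fun x hx => by
    rcases hx.1.eq_or_lt with rfl | hax
    · exact (if_pos le_rfl).trans hva.symm
    · exact (if_neg hax.not_ge).trans (if_pos hx.2)
  have hu_right : EqOn u g (Ici b) := fun x hx => by
    rcases (mem_Ici.1 hx).eq_or_lt with rfl | hbx
    · exact (hu_mid ⟨hab.le, le_rfl⟩).trans hvb
    · exact (if_neg (hab.trans hbx).not_ge).trans (if_neg hbx.not_ge)
  refine ⟨u, ?_, fun x => ?_, hu_left, hu_right, ?_⟩
  · refine hf.if_le (hv.if_le hg continuous_id continuous_const ?_)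
      continuous_id continuous_const ?_
    · rintro x rfl
      exact hvb
    · rintro x rfl
      exact hva.symm.trans (if_pos hab.le).symm
  · rcases le_total x a with hxa | hax
    · exact (hf_pos x).trans_eq (hu_left hxa).symm
    rcases le_total x b with hxb | hbx
    · exact (hv_pos x ⟨hax, hxb⟩).trans_eq (hu_mid ⟨hax, hxb⟩).symm
    · exact (hg_pos x).trans_eq (hu_right hbx).symm
  · rwa [intervalIntegral.integral_congr (by rwa [uIcc_of_le hab.le])]

lemma exists_mem_c1Diffeo_eqOn_Iic_Ici {e f : ℝ ≃o ℝ} (he : e ∈ c1Diffeo) (hf : f ∈ c1Diffeo)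
    {a b : ℝ} (hab : a < b) (h : e a < f b) :
    ∃ g ∈ c1Diffeo, EqOn g e (Iic a) ∧ EqOn g f (Ici b) := by
  obtain ⟨u, hu, hu_pos, hu_left, hu_right, hu_int⟩ := exists_continuous_pos_eqOn_Iic_Ici
    (he.1.continuous_deriv le_rfl) (hf.1.continuous_deriv le_rfl) (deriv_pos_of_mem_c1Diffeo he)
    (deriv_pos_of_mem_c1Diffeo hf) hab (sub_pos.2 h)
  set F : ℝ → ℝ := fun x => e a + ∫ t in a..x, u t
  have hF_left : EqOn F e (Iic a) := fun x hx => by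
    simp only [F]
    rw [integral_eq_sub_of_eqOn_deriv he.1
      (hu_left.mono (by rw [uIcc_of_ge hx]; exact Icc_subset_Iic_self)), add_sub_cancel]
  have hF_right : EqOn F f (Ici b) := fun x hx => by
    simp only [F]
    rw [← intervalIntegral.integral_add_adjacent_intervals (hu.intervalIntegrable a b)
      (hu.intervalIntegrable b x), hu_int, integral_eq_sub_of_eqOn_deriv hf.1
        (hu_right.mono (by rw [uIcc_of_le hx]; exact Icc_subset_Ici_self))]
    ring
  obtain ⟨g, hg, hgF⟩ := exists_mem_c1Diffeo_coe_eq (F := F)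
    (contDiff_one_const_add_integral hu _ _)
    (fun x => by rw [deriv_const_add_integral hu]; exact hu_pos x)
    (e.tendsto_atBot.congr' (hF_left.symm.eventuallyEq_of_mem (Iic_mem_atBot a)))
    (f.tendsto_atTop.congr' (hF_right.symm.eventuallyEq_of_mem (Ici_mem_atTop b)))
  exact ⟨g, hg, hgF ▸ hF_left, hgF ▸ hF_right⟩

lemma exists_mem_c1Diffeo_forall_eqOn_Icc {ι : Type*} (s : Finset ι) {α β : ι → ℝ}
    {G : ι → ℝ ≃o ℝ} (hG : ∀ i ∈ s, G i ∈ c1Diffeo) (hαβ : ∀ i ∈ s, α i ≤ β i)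
    (hsep : (s : Set ι).Pairwise fun i j => α i ≤ α j → β i < α j ∧ G i (β i) < G j (α j)) :
    ∃ g ∈ c1Diffeo, ∀ i ∈ s, EqOn g (G i) (Icc (α i) (β i)) := by
  classical
  induction s using Finset.induction_on_max_value α with
  | empty => exact ⟨1, one_mem _, by simp⟩
  | insert i s hi hmax ih =>
    rcases s.eq_empty_or_nonempty with rfl | hs
    · exact ⟨G i, hG i (by simp), by simp [EqOn]⟩
    obtain ⟨g, hg, hgG⟩ := ih (fun j hj => hG j (Finset.mem_insert_of_mem hj))
      (fun j hj => hαβ j (Finset.mem_insert_of_mem hj)) (hsep.mono (by simp))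
    have hsep_i : ∀ j ∈ s, β j < α i ∧ G j (β j) < G i (α i) := fun j hj =>
      hsep (by simp [hj]) (by simp) (ne_of_mem_of_not_mem hj hi) (hmax j hj)
    obtain ⟨j, hj, hj_max⟩ := s.exists_max_image β hs
    obtain ⟨g', hg', hg'_left, hg'_right⟩ := exists_mem_c1Diffeo_eqOn_Iic_Ici hg
      (hG i (by simp)) (hsep_i j hj).1
      ((hgG j hj ⟨hαβ j (by simp [hj]), le_rfl⟩).trans_lt (hsep_i j hj).2)
    refine ⟨g', hg', fun k hk => ?_⟩
    rcases Finset.mem_insert.1 hk with rfl | hk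
    · exact hg'_right.mono Icc_subset_Ici_self
    · exact (hg'_left.mono fun x hx => hx.2.trans (hj_max k hk)).trans (hgG k hk)

/-! ### Words and prefix replacement -/

section Words

variable {ι α β : Type*} [Preorder α] [Preorder β]

/-- The composite `e j₁ ∘ ⋯ ∘ e jₖ` attached to the word `[j₁, …, jₖ]`. -/
def wordMap (e : ι → α ≃o α) (w : List ι) : α ≃o α :=
  (w.map e).prod

lemma wordMap_nil_apply (e : ι → α ≃o α) (x : α) : wordMap e [] x = x :=
  rfl

lemma wordMap_cons_apply (e : ι → α ≃o α) (j : ι) (w : List ι) (x : α) :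
    wordMap e (j :: w) x = e j (wordMap e w x) := by
  rw [wordMap, List.map_cons, List.prod_cons, wordMap, RelIso.mul_apply]

lemma wordMap_append_apply (e : ι → α ≃o α) (w u : List ι) (x : α) :
    wordMap e (w ++ u) x = wordMap e w (wordMap e u x) := by
  rw [wordMap, List.map_append, List.prod_append, wordMap, wordMap, RelIso.mul_apply]

lemma mapsTo_wordMap {e : ι → α ≃o α} {S : Set α} (h : ∀ j, MapsTo (e j) S S) (w : List ι) :
    MapsTo (wordMap e w) S S := by
  induction w with
  | nil => exact mapsTo_id S
  | cons j w ih => exact fun x hx => wordMap_cons_apply e j w x ▸ h j (ih hx)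

/-- `S` is nonempty and is the disjoint union of its copies `e j '' S`. -/
structure IsSelfSimilar (e : ι → α ≃o α) (S : Set α) : Prop where
  nonempty : S.Nonempty
  iUnion_image : ⋃ j, e j '' S = S
  disjoint : Pairwise fun i j => Disjoint (e i '' S) (e j '' S)

namespace IsSelfSimilar

variable {e : ι → α ≃o α} {S : Set α}

lemma mapsTo (h : IsSelfSimilar e S) (j : ι) : MapsTo (e j) S S :=
  mapsTo_iff_image_subset.2 ((subset_iUnion (fun j => e j '' S) j).trans h.iUnion_image.subset)

lemma eq_of_apply_eq (h : IsSelfSimilar e S) {i j : ι} {x y : α} (hx : x ∈ S) (hy : y ∈ S)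
    (hxy : e i x = e j y) : i = j :=
  h.disjoint.eq (not_disjoint_iff.2 ⟨e i x, mem_image_of_mem _ hx, hxy ▸ mem_image_of_mem _ hy⟩)

lemma exists_wordMap_eq (h : IsSelfSimilar e S) (N : ℕ) {x : α} (hx : x ∈ S) :
    ∃ w : List ι, w.length = N ∧ ∃ y ∈ S, wordMap e w y = x := by
  induction N generalizing x with
  | zero => exact ⟨[], rfl, x, hx, rfl⟩
  | succ N ih =>
    rw [← h.iUnion_image] at hx
    obtain ⟨j, y, hy, rfl⟩ := mem_iUnion.1 hx
    obtain ⟨w, hw, z, hz, rfl⟩ := ih hy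
    exact ⟨j :: w, congrArg Nat.succ hw, z, hz, wordMap_cons_apply e j w z⟩

lemma eq_of_wordMap_apply_eq (h : IsSelfSimilar e S) {w v : List ι} (hlen : w.length = v.length)
    {x y : α} (hx : x ∈ S) (hy : y ∈ S) (hxy : wordMap e w x = wordMap e v y) : w = v := by
  induction w generalizing v with
  | nil => exact (List.length_eq_zero_iff.1 hlen.symm).symm
  | cons i w ih =>
    obtain ⟨j, v, rfl⟩ := List.exists_cons_of_length_eq_add_one hlen.symm
    simp only [wordMap_cons_apply] at hxy
    obtain rfl := h.eq_of_apply_eq (mapsTo_wordMap h.mapsTo w hx) (mapsTo_wordMap h.mapsTo v hy) hxy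
    rw [ih (Nat.succ.inj hlen) ((e i).injective hxy)]

lemma not_eqOn_wordMap_cons_id [Nontrivial ι] (h : IsSelfSimilar e S) (j : ι) (w : List ι) :
    ¬ EqOn (wordMap e (j :: w)) id S := by
  obtain ⟨x, hx⟩ := h.nonempty
  obtain ⟨i, hij⟩ := exists_ne j
  intro hid
  have hfix := hid (h.mapsTo i hx)
  rw [wordMap_cons_apply] at hfix
  exact hij (h.eq_of_apply_eq hx (mapsTo_wordMap h.mapsTo w (h.mapsTo i hx)) hfix.symm)

lemma eq_of_eqOn_wordMap [Nontrivial ι] (h : IsSelfSimilar e S) {w v : List ι}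
    (hwv : EqOn (wordMap e w) (wordMap e v) S) : w = v := by
  induction w generalizing v with
  | nil =>
    cases v with
    | nil => rfl
    | cons j v => exact absurd hwv.symm (h.not_eqOn_wordMap_cons_id j v)
  | cons i w ih =>
    cases v with
    | nil => exact absurd hwv (h.not_eqOn_wordMap_cons_id i w)
    | cons j v =>
      have hcons : ∀ x ∈ S, e i (wordMap e w x) = e j (wordMap e v x) := fun x hx => by
        simpa only [wordMap_cons_apply] using hwv hx
      obtain ⟨x, hx⟩ := h.nonempty
      obtain rfl := h.eq_of_apply_eq (mapsTo_wordMap h.mapsTo w hx)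
        (mapsTo_wordMap h.mapsTo v hx) (hcons x hx)
      rw [ih fun x hx => (e i).injective (hcons x hx)]

lemma comp_equiv {κ : Type*} (h : IsSelfSimilar e S) (σ : κ ≃ ι) : IsSelfSimilar (e ∘ σ) S where
  nonempty := h.nonempty
  iUnion_image := (σ.surjective.iUnion_comp fun j => e j '' S).trans h.iUnion_image
  disjoint := h.disjoint.comp_of_injective σ.injective

end IsSelfSimilar

/-- On points of `S` coded by words in the maps `e j`, the map `f` replaces the prefix `w`
by `v`. -/
def ReplacesPrefix (e : ι → α ≃o α) (S : Set α) (f : α → α) (w v : List ι) : Prop :=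
  ∀ x ∈ S, f (wordMap e w x) = wordMap e v x

lemma ReplacesPrefix.append {e : ι → α ≃o α} {S : Set α} {f : α → α} {w v : List ι}
    (h : ReplacesPrefix e S f w v) (hS : ∀ j, MapsTo (e j) S S) (u : List ι) :
    ReplacesPrefix e S f (w ++ u) (v ++ u) := fun x hx => by
  simp only [wordMap_append_apply, h _ (mapsTo_wordMap hS u hx)]

/-- Up to coding, `f` on `S` and `g` on `C` are the same map: both replace every sufficiently long
prefix by the same word. -/
def ReplacesSamePrefixes (a : ι → α ≃o α) (S : Set α) (e : ι → β ≃o β) (C : Set β)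
    (f : α → α) (g : β → β) : Prop :=
  ∃ N, ∀ w : List ι, N ≤ w.length → ∃ v, ReplacesPrefix a S f w v ∧ ReplacesPrefix e C g w v

namespace ReplacesSamePrefixes

variable {a : ι → α ≃o α} {S : Set α} {e : ι → β ≃o β} {C : Set β} {f f' : α → α} {g g' : β → β}

lemma of_length_eq (hS : ∀ j, MapsTo (a j) S S) (hC : ∀ j, MapsTo (e j) C C) {N : ℕ}
    (h : ∀ w : List ι, w.length = N → ∃ v, ReplacesPrefix a S f w v ∧ ReplacesPrefix e C g w v) :
    ReplacesSamePrefixes a S e C f g := by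
  refine ⟨N, fun w hw => ?_⟩
  obtain ⟨v, hf, hg⟩ := h (w.take N) (List.length_take_of_le hw)
  rw [← w.take_append_drop N]
  exact ⟨v ++ w.drop N, hf.append hS _, hg.append hC _⟩

lemma symm (h : ReplacesSamePrefixes a S e C f g) : ReplacesSamePrefixes e C a S g f :=
  h.imp fun _ hN w hw => (hN w hw).imp fun _ => And.symm

lemma comp (hS : ∀ j, MapsTo (a j) S S) (hC : ∀ j, MapsTo (e j) C C)
    (h : ReplacesSamePrefixes a S e C f g) (h' : ReplacesSamePrefixes a S e C f' g') :
    ReplacesSamePrefixes a S e C (f ∘ f') (g ∘ g') := by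
  obtain ⟨N, hN⟩ := h
  obtain ⟨N', hN'⟩ := h'
  refine of_length_eq (N := N' + N) hS hC fun w hw => ?_
  obtain ⟨v, hf', hg'⟩ := hN' (w.take N') (List.length_take_of_le (by lia)).ge
  obtain ⟨u, hf, hg⟩ := hN (v ++ w.drop N') (by rw [List.length_append, List.length_drop]; lia)
  have hf'' := hf'.append hS (w.drop N')
  have hg'' := hg'.append hC (w.drop N')
  rw [List.take_append_drop] at hf'' hg''
  exact ⟨u, fun x hx => by rw [Function.comp_apply, hf'' x hx, hf x hx],
    fun x hx => by rw [Function.comp_apply, hg'' x hx, hg x hx]⟩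

lemma mapsTo (hC : IsSelfSimilar e C) (h : ReplacesSamePrefixes a S e C f g) : MapsTo g C C := by
  obtain ⟨N, hN⟩ := h
  intro y hy
  obtain ⟨w, hw, z, hz, rfl⟩ := hC.exists_wordMap_eq N hy
  obtain ⟨v, -, hg⟩ := hN w hw.ge
  exact hg z hz ▸ mapsTo_wordMap hC.mapsTo v hz

lemma surjOn [Finite ι] (hS : IsSelfSimilar a S) (hC : IsSelfSimilar e C)
    (h : ReplacesSamePrefixes a S e C f g) (hf : SurjOn f S S) : SurjOn g C C := by
  obtain ⟨N, hN⟩ := h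
  choose! V hVf hVg using hN
  obtain ⟨L, hL⟩ := ((List.finite_length_eq ι N).image fun w => (V w).length).bddAbove
  intro y hy
  obtain ⟨u, hu, z, hz, rfl⟩ := hC.exists_wordMap_eq L hy
  obtain ⟨x, hx⟩ := hS.nonempty
  obtain ⟨t, ht, htu⟩ := hf (mapsTo_wordMap hS.mapsTo u hx)
  obtain ⟨w, hw, s, hs, rfl⟩ := hS.exists_wordMap_eq N ht
  have hlen : (V w).length ≤ u.length := hu ▸ hL (mem_image_of_mem _ hw)
  rw [hVf w hw.ge s hs, ← u.take_append_drop (V w).length, wordMap_append_apply] at htu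
  have hprefix : V w = u.take (V w).length :=
    hS.eq_of_wordMap_apply_eq (List.length_take_of_le hlen).symm hs
      (mapsTo_wordMap hS.mapsTo _ hx) htu
  have hz' := mapsTo_wordMap hC.mapsTo (u.drop (V w).length) hz
  refine ⟨_, mapsTo_wordMap hC.mapsTo w hz', ?_⟩
  rw [hVg w hw.ge _ hz', ← u.take_append_drop (V w).length, wordMap_append_apply, ← hprefix,
    List.drop_left]

lemma eqOn [Nontrivial ι] (hS : IsSelfSimilar a S) (hC : IsSelfSimilar e C)
    (h : ReplacesSamePrefixes a S e C f g) (h' : ReplacesSamePrefixes a S e C f' g')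
    (hff' : EqOn f f' S) : EqOn g g' C := by
  obtain ⟨N, hN⟩ := h
  obtain ⟨N', hN'⟩ := h'
  intro y hy
  obtain ⟨w, hw, z, hz, rfl⟩ := hC.exists_wordMap_eq (N + N') hy
  obtain ⟨v, hf, hg⟩ := hN w (by lia)
  obtain ⟨v', hf', hg'⟩ := hN' w (by lia)
  obtain rfl : v = v' := hS.eq_of_eqOn_wordMap fun x hx => by
    rw [← hf x hx, ← hf' x hx, hff' (mapsTo_wordMap hS.mapsTo w hx)]
  rw [hg z hz, hg' z hz]

end ReplacesSamePrefixes

end Words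

section Order

variable {ι : Type*} {a e : ι → ℝ ≃o ℝ}

lemma wordMap_cons_one_le (hmaps : ∀ j, MapsTo (a j) (Icc 0 1) (Icc 0 1)) (j : ι) (w : List ι) :
    wordMap a (j :: w) 1 ≤ a j 1 := by
  rw [wordMap_cons_apply]
  exact (a j).monotone (mapsTo_wordMap hmaps w (right_mem_Icc.2 zero_le_one)).2

lemma le_wordMap_cons_zero (hmaps : ∀ j, MapsTo (a j) (Icc 0 1) (Icc 0 1)) (j : ι) (w : List ι) :
    a j 0 ≤ wordMap a (j :: w) 0 := by
  rw [wordMap_cons_apply]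
  exact (a j).monotone (mapsTo_wordMap hmaps w (left_mem_Icc.2 zero_le_one)).1

variable [LinearOrder ι]

lemma wordMap_one_le_wordMap_zero_or (hmaps : ∀ j, MapsTo (a j) (Icc 0 1) (Icc 0 1))
    (hle : ∀ ⦃i j⦄, i < j → a i 1 ≤ a j 0) {w v : List ι} (hlen : w.length = v.length)
    (hne : w ≠ v) : wordMap a w 1 ≤ wordMap a v 0 ∨ wordMap a v 1 ≤ wordMap a w 0 := by
  induction w generalizing v with
  | nil => exact absurd (List.length_eq_zero_iff.1 hlen.symm).symm hne
  | cons i w ih =>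
    obtain ⟨j, v, rfl⟩ := List.exists_cons_of_length_eq_add_one hlen.symm
    rcases lt_trichotomy i j with hij | rfl | hij
    · exact .inl ((wordMap_cons_one_le hmaps i w).trans
        ((hle hij).trans (le_wordMap_cons_zero hmaps j v)))
    · simp only [wordMap_cons_apply, (a i).le_iff_le]
      exact ih (Nat.succ.inj hlen) fun h => hne (h ▸ rfl)
    · exact .inr ((wordMap_cons_one_le hmaps j v).trans
        ((hle hij).trans (le_wordMap_cons_zero hmaps i w)))

lemma wordMap_one_lt_wordMap_zero (ha : ∀ j, MapsTo (a j) (Icc 0 1) (Icc 0 1))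
    (hle : ∀ ⦃i j⦄, i < j → a i 1 ≤ a j 0) (he : ∀ j, MapsTo (e j) (Icc 0 1) (Icc 0 1))
    (hlt : ∀ ⦃i j⦄, i < j → e i 1 < e j 0) {w v : List ι}
    (h : wordMap a w 1 ≤ wordMap a v 0) : wordMap e w 1 < wordMap e v 0 := by
  have hzero_lt_one (u : List ι) : wordMap a u 0 < wordMap a u 1 :=
    (wordMap a u).strictMono zero_lt_one
  induction w generalizing v with
  | nil =>
    exact absurd h ((hzero_lt_one v).trans_le
      (mapsTo_wordMap ha v (right_mem_Icc.2 zero_le_one)).2).not_ge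
  | cons i w ih =>
    cases v with
    | nil =>
      exact absurd h ((mapsTo_wordMap ha (i :: w) (left_mem_Icc.2 zero_le_one)).1.trans_lt
        (hzero_lt_one (i :: w))).not_ge
    | cons j v =>
      rcases lt_trichotomy i j with hij | rfl | hij
      · exact (wordMap_cons_one_le he i w).trans_lt
          ((hlt hij).trans_le (le_wordMap_cons_zero he j v))
      · simp only [wordMap_cons_apply, (a i).le_iff_le, (e i).lt_iff_lt] at h ⊢
        exact ih h
      · have hback : wordMap a (j :: v) 1 ≤ wordMap a (i :: w) 0 :=
          (wordMap_cons_one_le ha j v).trans ((hle hij).trans (le_wordMap_cons_zero ha i w))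
        linarith [hzero_lt_one (i :: w), hzero_lt_one (j :: v)]

end Order

/-! ### Base `p` expansions of Higman–Thompson maps -/

/-- The inverse branch `x ↦ (j + x) / p` of multiplication by `p` modulo `1`; its words are the
base `p` expansions. -/
noncomputable def digitMap (p : ℕ) (j : Fin p) : ℝ ≃o ℝ :=
  (OrderIso.addLeft (j : ℝ)).trans (OrderIso.divRight₀ (p : ℝ) (Nat.cast_pos.2 j.pos))

section DigitMap

variable {p : ℕ}

lemma digitMap_apply (j : Fin p) (x : ℝ) : digitMap p j x = (j + x) / p :=
  rfl

lemma mapsTo_digitMap_Icc (j : Fin p) : MapsTo (digitMap p j) (Icc 0 1) (Icc 0 1) := by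
  have hp : (0 : ℝ) < p := Nat.cast_pos.2 j.pos
  have hj : (j : ℝ) + 1 ≤ p := by exact_mod_cast j.isLt
  intro x hx
  rw [digitMap_apply, mem_Icc, div_le_one₀ hp]
  exact ⟨div_nonneg (add_nonneg j.val.cast_nonneg hx.1) hp.le, by linarith [hx.2]⟩

lemma digitMap_one_le_digitMap_zero ⦃i j : Fin p⦄ (hij : i < j) :
    digitMap p i 1 ≤ digitMap p j 0 := by
  have hij' : (i : ℝ) + 1 ≤ j := by exact_mod_cast hij
  rw [digitMap_apply, digitMap_apply, add_zero]
  gcongr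

lemma isSelfSimilar_digitMap [NeZero p] : IsSelfSimilar (digitMap p) (Ico 0 1) where
  nonempty := ⟨0, left_mem_Ico.2 zero_lt_one⟩
  iUnion_image := by
    have hp : (0 : ℝ) < p := Nat.cast_pos.2 (Nat.pos_of_neZero p)
    refine Subset.antisymm (iUnion_subset fun j => ?_) fun x hx => ?_
    · rw [OrderIso.image_Ico]
      have h0 := mapsTo_digitMap_Icc j (left_mem_Icc.2 zero_le_one)
      have h1 := mapsTo_digitMap_Icc j (right_mem_Icc.2 zero_le_one)
      exact Ico_subset_Ico h0.1 h1.2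
    · have hpx : 0 ≤ p * x := mul_nonneg hp.le hx.1
      have hlt : p * x < p := mul_lt_of_lt_one_right hp hx.2
      refine mem_iUnion.2 ⟨⟨⌊p * x⌋₊, (Nat.floor_lt hpx).2 hlt⟩, p * x - ⌊p * x⌋₊,
        ⟨sub_nonneg.2 (Nat.floor_le hpx), by linarith [Nat.lt_floor_add_one (p * x)]⟩, ?_⟩
      rw [digitMap_apply, add_sub_cancel, mul_div_cancel_left₀ x hp.ne']
  disjoint := by
    refine pairwise_disjoint_on _ |>.2 fun i j hij => ?_
    rw [OrderIso.image_Ico, OrderIso.image_Ico]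
    exact Ico_disjoint_Ico_same.mono_right (Ico_subset_Ico_left (digitMap_one_le_digitMap_zero hij))

lemma exists_wordMap_digitMap_apply (w : List (Fin p)) :
    ∃ a < p ^ w.length, ∀ t, wordMap (digitMap p) w t = (a + t) / p ^ w.length := by
  induction w with
  | nil => exact ⟨0, by simp, fun t => by simp [wordMap_nil_apply]⟩
  | cons j w ih =>
    obtain ⟨a, ha, haw⟩ := ih
    have hp : (p : ℝ) ≠ 0 := Nat.cast_ne_zero.2 j.pos.ne'
    refine ⟨j * p ^ w.length + a, ?_, fun t => ?_⟩
    · calc j * p ^ w.length + a < (j + 1) * p ^ w.length := by linarith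
        _ ≤ p * p ^ w.length := Nat.mul_le_mul_right _ j.isLt
        _ = p ^ (j :: w).length := by rw [List.length_cons, pow_succ']
    · rw [wordMap_cons_apply, haw, digitMap_apply, List.length_cons, pow_succ']
      push_cast
      field_simp
      ring

lemma exists_wordMap_digitMap_eq {M b : ℕ} (hb : b < p ^ M) :
    ∃ v : List (Fin p), ∀ t, wordMap (digitMap p) v t = (b + t) / p ^ M := by
  induction M generalizing b with
  | zero => exact ⟨[], fun t => by simp [wordMap_nil_apply, Nat.lt_one_iff.1 (pow_zero p ▸ hb)]⟩
  | succ M ih =>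
    have hp : 0 < p := Nat.pos_of_ne_zero fun hp => by simp [hp] at hb
    obtain ⟨v, hv⟩ := ih (Nat.mod_lt b (pow_pos hp M))
    have hj : b / p ^ M < p := Nat.div_lt_of_lt_mul (by rwa [← pow_succ])
    refine ⟨⟨b / p ^ M, hj⟩ :: v, fun t => ?_⟩
    have hp' : (p : ℝ) ≠ 0 := Nat.cast_ne_zero.2 hp.ne'
    have hdiv : (p : ℝ) ^ M * ↑(b / p ^ M) + ↑(b % p ^ M) = b := by
      exact_mod_cast Nat.div_add_mod b (p ^ M)
    rw [wordMap_cons_apply, hv, digitMap_apply, pow_succ', ← hdiv]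
    field_simp
    ring

end DigitMap

/-- The ring `ℤ[1/p]` as a subring of `ℝ`. -/
noncomputable def intAdjoinInv (p : ℕ) : Subring ℝ :=
  Subring.closure {(p : ℝ)⁻¹}

section IntAdjoinInv

variable {p : ℕ}

lemma inv_mem_intAdjoinInv : (p : ℝ)⁻¹ ∈ intAdjoinInv p :=
  Subring.subset_closure rfl

lemma zpow_mem_intAdjoinInv (k : ℤ) : (p : ℝ) ^ k ∈ intAdjoinInv p := by
  obtain ⟨n, rfl | rfl⟩ := k.eq_nat_or_neg
  · exact zpow_natCast (p : ℝ) n ▸ pow_mem (natCast_mem _ p) n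
  · rw [zpow_neg, zpow_natCast, ← inv_pow]
    exact pow_mem inv_mem_intAdjoinInv n

lemma intCast_div_pow_mem_intAdjoinInv (a : ℤ) (e : ℕ) : (a : ℝ) / p ^ e ∈ intAdjoinInv p := by
  rw [div_eq_mul_inv, ← inv_pow]
  exact mul_mem (intCast_mem _ a) (pow_mem inv_mem_intAdjoinInv e)

lemma exists_mul_pow_eq_intCast [NeZero p] {y : ℝ} (hy : y ∈ intAdjoinInv p) :
    ∃ (N : ℕ) (A : ℤ), y * p ^ N = A := by
  induction hy using Subring.closure_induction with
  | mem y hy => exact ⟨1, 1, by simp [mem_singleton_iff.1 hy, NeZero.ne]⟩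
  | zero => exact ⟨0, 0, by simp⟩
  | one => exact ⟨0, 1, by simp⟩
  | neg y _ ih =>
    obtain ⟨N, A, h⟩ := ih
    exact ⟨N, -A, by rw [neg_mul, h, Int.cast_neg]⟩
  | add y z _ _ ihy ihz =>
    obtain ⟨N, A, h⟩ := ihy
    obtain ⟨M, B, h'⟩ := ihz
    exact ⟨N + M, A * p ^ M + B * p ^ N, by push_cast; rw [← h, ← h']; ring⟩
  | mul y z _ _ ihy ihz =>
    obtain ⟨N, A, h⟩ := ihy
    obtain ⟨M, B, h'⟩ := ihz
    exact ⟨N + M, A * B, by push_cast; rw [← h, ← h']; ring⟩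

lemma eventually_exists_mul_pow_eq_intCast [NeZero p] {y : ℝ} (hy : y ∈ intAdjoinInv p) :
    ∀ᶠ N : ℕ in atTop, ∃ A : ℤ, y * p ^ N = A := by
  obtain ⟨N₀, A, hA⟩ := exists_mul_pow_eq_intCast hy
  filter_upwards [eventually_ge_atTop N₀] with N hN
  refine ⟨A * p ^ (N - N₀), ?_⟩
  rw [← Nat.add_sub_cancel' hN, pow_add, ← mul_assoc, hA, Nat.add_sub_cancel_left]
  norm_cast

lemma eventually_exists_add_zpow_mul_eq [NeZero p] {c : ℝ} (hc : c ∈ intAdjoinInv p) (k : ℤ) :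
    ∀ᶠ N : ℕ in atTop, ∃ M : ℕ, ∀ a : ℤ, ∃ b : ℤ, ∀ t : ℝ,
      c + p ^ k * ((a + t) / p ^ N) = (b + t) / p ^ M := by
  have hp : (p : ℝ) ≠ 0 := Nat.cast_ne_zero.2 (NeZero.ne p)
  obtain ⟨N₀, hN₀⟩ := eventually_atTop.1 (eventually_exists_mul_pow_eq_intCast hc)
  filter_upwards [eventually_ge_atTop (N₀ + k.natAbs)] with N hN
  obtain ⟨M, hM⟩ : ∃ M : ℕ, (M : ℤ) = N - k := ⟨(N - k).toNat, Int.toNat_of_nonneg (by lia)⟩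
  obtain ⟨A, hA⟩ := hN₀ M (by lia)
  refine ⟨M, fun a => ⟨A + a, fun t => ?_⟩⟩
  have hpow : (p : ℝ) ^ k * p ^ M = p ^ N := by
    rw [← zpow_natCast, ← zpow_natCast, ← zpow_add₀ hp, hM, add_sub_cancel]
  rw [← hpow, eq_div_iff (pow_ne_zero M hp), add_mul, hA]
  have hk : (p : ℝ) ^ k ≠ 0 := zpow_ne_zero k hp
  push_cast
  field_simp
  ring

end IntAdjoinInv

lemma exists_mem_Ico_succ {α : Type*} [LinearOrder α] {x : ℕ → α} {m : ℕ} {y : α} (h0 : x 0 ≤ y)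
    (hm : y < x m) : ∃ i < m, y ∈ Ico (x i) (x (i + 1)) := by
  induction m with
  | zero => exact absurd h0 hm.not_ge
  | succ m ih =>
    rcases lt_or_ge y (x m) with hy | hy
    · exact (ih hy).imp fun i hi => ⟨hi.1.trans m.lt_succ_self, hi.2⟩
    · exact ⟨m, m.lt_succ_self, hy, hm⟩

lemma wordMap_digitMap_one_le_of_lt {p : ℕ} {w : List (Fin p)} {y : ℝ} {A : ℤ}
    (hA : y * p ^ w.length = A) (hy : wordMap (digitMap p) w 0 < y) :
    wordMap (digitMap p) w 1 ≤ y := by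
  obtain ⟨a, ha, haw⟩ := exists_wordMap_digitMap_apply w
  have hpos : (0 : ℝ) < p ^ w.length := by exact_mod_cast (Nat.zero_le a).trans_lt ha
  rw [haw, div_lt_iff₀ hpos, hA, add_zero] at hy
  rw [haw, div_le_iff₀ hpos, hA]
  exact_mod_cast hy

lemma exists_wordMap_digitMap_eq_of_mapsTo {p M : ℕ} [NeZero p] {b : ℤ}
    (h : MapsTo (fun t : ℝ => (b + t) / (p : ℝ) ^ M) (Icc 0 1) (Icc 0 1)) :
    ∃ v : List (Fin p), ∀ t, wordMap (digitMap p) v t = (b + t) / p ^ M := by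
  have hpos : (0 : ℝ) < p ^ M := pow_pos (Nat.cast_pos.2 (Nat.pos_of_neZero p)) M
  have hb0 : 0 ≤ b := by
    have h0 : (0 : ℝ) ≤ (b + 0) / p ^ M := (h (left_mem_Icc.2 zero_le_one)).1
    rw [add_zero, le_div_iff₀ hpos, zero_mul] at h0
    exact_mod_cast h0
  lift b to ℕ using hb0
  have hb1 : b < p ^ M := by
    have h1 : ((b : ℕ) + 1) / (p : ℝ) ^ M ≤ 1 := (h (right_mem_Icc.2 zero_le_one)).2
    rw [div_le_one₀ hpos] at h1
    exact_mod_cast h1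
  exact exists_wordMap_digitMap_eq hb1

namespace IsHigmanThompson

variable {p : ℕ} {f : ℝ → ℝ}

lemma mapsTo_Icc (hf : IsHigmanThompson p f) : MapsTo f (Icc 0 1) (Icc 0 1) := by
  obtain ⟨h0, h1, hmono, -⟩ := hf
  simpa only [h0, h1] using hmono.monotoneOn.mapsTo_Icc

lemma exists_affine_pieces (hf : IsHigmanThompson p f) :
    ∃ (m : ℕ) (x : ℕ → ℝ), x 0 = 0 ∧ x m = 1 ∧ (∀ i ≤ m, x i ∈ intAdjoinInv p) ∧
      ∀ i < m, ∃ c ∈ intAdjoinInv p, ∃ k : ℤ, ∀ t ∈ Icc (x i) (x (i + 1)), f t = c + p ^ k * t := by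
  obtain ⟨h0, -, -, m, x, -, hx0, hxm, hlt, hfrac, hpiece⟩ := hf
  have hx : ∀ i ≤ m, x i ∈ intAdjoinInv p := fun i hi => by
    obtain ⟨a, e, h⟩ := hfrac i hi
    exact h ▸ intCast_div_pow_mem_intAdjoinInv a e
  have hfx : ∀ i ≤ m, f (x i) ∈ intAdjoinInv p := fun i => by
    induction i with
    | zero =>
      intro _
      rw [hx0, h0]
      exact zero_mem _
    | succ i ih =>
      intro hi
      obtain ⟨k, hk⟩ := hpiece i hi
      rw [hk _ (right_mem_Icc.2 (hlt i hi).le)]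
      exact add_mem (ih (Nat.le_of_succ_le hi)) (mul_mem (zpow_mem_intAdjoinInv k)
        (sub_mem (hx _ hi) (hx i (Nat.le_of_succ_le hi))))
  refine ⟨m, x, hx0, hxm, hx, fun i hi => ?_⟩
  obtain ⟨k, hk⟩ := hpiece i hi
  refine ⟨f (x i) - p ^ k * x i, sub_mem (hfx i hi.le)
    (mul_mem (zpow_mem_intAdjoinInv k) (hx i hi.le)), k, fun t ht => ?_⟩
  rw [hk t ht]
  ring

lemma surjOn_Ico (hf : IsHigmanThompson p f) : SurjOn f (Ico 0 1) (Ico 0 1) := by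
  obtain ⟨h0, h1, -, m, x, -, hx0, hxm, hlt, -, hpiece⟩ := hf
  have hsurj : ∀ i ≤ m, 0 ≤ x i ∧ SurjOn f (Ico 0 (x i)) (Ico 0 (f (x i))) := fun i => by
    induction i with
    | zero =>
      intro _
      rw [hx0, h0, Ico_self]
      exact ⟨le_rfl, surjOn_empty _ _⟩
    | succ i ih =>
      intro hi
      obtain ⟨hxi, hsurj_i⟩ := ih (Nat.le_of_succ_le hi)
      obtain ⟨k, hk⟩ := hpiece i hi
      have hcont : ContinuousOn f (Icc (x i) (x (i + 1))) :=
        ContinuousOn.congr (by fun_prop) hk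
      refine ⟨hxi.trans (hlt i hi).le, fun y hy => ?_⟩
      rcases lt_or_ge y (f (x i)) with hyi | hyi
      · exact image_mono (Ico_subset_Ico_right (hlt i hi).le) (hsurj_i ⟨hy.1, hyi⟩)
      · exact image_mono (Ico_subset_Ico_left hxi)
          (intermediate_value_Ico (hlt i hi).le hcont ⟨hyi, hy.2⟩)
  simpa only [hxm, h1] using (hsurj m le_rfl).2

lemma exists_replacesPrefix [NeZero p] (hf : IsHigmanThompson p f) :
    ∃ N : ℕ, ∀ w : List (Fin p), w.length = N →
      ∃ v, ReplacesPrefix (digitMap p) (Icc 0 1) f w v := by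
  obtain ⟨m, x, hx0, hxm, hx, hpiece⟩ := hf.exists_affine_pieces
  choose! c hc k hk using hpiece
  obtain ⟨N, hbreak, hN⟩ : ∃ N : ℕ, (∀ i ∈ Iic m, ∃ A : ℤ, x i * p ^ N = A) ∧
      ∀ i ∈ Iio m, ∃ M : ℕ, ∀ a : ℤ, ∃ b : ℤ, ∀ t : ℝ,
        c i + p ^ k i * ((a + t) / p ^ N) = (b + t) / p ^ M :=
    (((finite_Iic m).eventually_all.2 fun i hi =>
      eventually_exists_mul_pow_eq_intCast (hx i hi)).and
      ((finite_Iio m).eventually_all.2 fun i hi =>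
        eventually_exists_add_zpow_mul_eq (hc i hi) (k i))).exists
  refine ⟨N, fun w hw => ?_⟩
  obtain ⟨hw0, hw1⟩ := mapsTo_wordMap isSelfSimilar_digitMap.mapsTo w (left_mem_Ico.2 zero_lt_one)
  obtain ⟨i, hi, hxi, hxi'⟩ := exists_mem_Ico_succ (hx0.trans_le hw0) (hw1.trans_eq hxm.symm)
  obtain ⟨A, hA⟩ := hbreak (i + 1) hi
  have hle : wordMap (digitMap p) w 1 ≤ x (i + 1) :=
    wordMap_digitMap_one_le_of_lt (hw ▸ hA) hxi'
  obtain ⟨a, -, haw⟩ := exists_wordMap_digitMap_apply w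
  obtain ⟨M, hM⟩ := hN i hi
  obtain ⟨b, hb⟩ := hM a
  have hfb : ∀ t ∈ Icc (0 : ℝ) 1, f (wordMap (digitMap p) w t) = (b + t) / p ^ M := fun t ht => by
    rw [hk i hi _ ⟨hxi.trans ((wordMap _ w).monotone ht.1),
      ((wordMap _ w).monotone ht.2).trans hle⟩, haw, hw, ← hb, Int.cast_natCast]
  obtain ⟨v, hv⟩ := exists_wordMap_digitMap_eq_of_mapsTo fun t ht =>
    hfb t ht ▸ hf.mapsTo_Icc (mapsTo_wordMap mapsTo_digitMap_Icc w ht)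
  exact ⟨v, fun t ht => (hfb t ht).trans (hv t).symm⟩

end IsHigmanThompson

/-! ### Realization by diffeomorphisms -/

lemma IsHigmanThompson.eqOn_id {f : ℝ → ℝ} (hf : IsHigmanThompson 1 f) : EqOn f id (Icc 0 1) := by
  have hid : ∀ (w : List (Fin 1)) (t : ℝ), wordMap (digitMap 1) w t = t := fun w t => by
    obtain ⟨a, ha, haw⟩ := exists_wordMap_digitMap_apply w
    rw [one_pow, Nat.lt_one_iff] at ha
    simp [haw, ha]
  obtain ⟨N, hN⟩ := hf.exists_replacesPrefix
  obtain ⟨v, hv⟩ := hN (List.replicate N 0) List.length_replicate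
  intro t ht
  simpa only [hid, id] using hv t ht

lemma exists_mem_c1Diffeo_forall_replacesPrefix {ι : Type*} {e : ι → ℝ ≃o ℝ}
    (he : ∀ j, e j ∈ c1Diffeo) (s : Finset (List ι)) (V : List ι → List ι)
    (hsep : (s : Set (List ι)).Pairwise fun w w' => wordMap e w 0 ≤ wordMap e w' 0 →
      wordMap e w 1 < wordMap e w' 0 ∧ wordMap e (V w) 1 < wordMap e (V w') 0) :
    ∃ g ∈ c1Diffeo, ∀ w ∈ s, ReplacesPrefix e (Icc 0 1) g w (V w) := by
  have hmem : ∀ w, wordMap e w ∈ c1Diffeo := fun w =>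
    c1Diffeo.list_prod_mem (by simpa using fun j _ => he j)
  have hreplace : ∀ w x, (wordMap e (V w) * (wordMap e w)⁻¹) (wordMap e w x) = wordMap e (V w) x :=
    fun w x => congrArg (wordMap e (V w)) ((wordMap e w).symm_apply_apply x)
  obtain ⟨g, hg, hgs⟩ := exists_mem_c1Diffeo_forall_eqOn_Icc s
    (α := fun w => wordMap e w 0) (β := fun w => wordMap e w 1)
    (G := fun w => wordMap e (V w) * (wordMap e w)⁻¹)
    (fun w _ => mul_mem (hmem _) (inv_mem (hmem w)))
    (fun w _ => (wordMap e w).monotone zero_le_one) (by simpa only [hreplace] using hsep)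
  refine ⟨g, hg, fun w hw x hx => ?_⟩
  rw [hgs w hw ⟨(wordMap e w).monotone hx.1, (wordMap e w).monotone hx.2⟩, hreplace]

section Realization

variable {p : ℕ} [NeZero p] {e : Fin p → ℝ ≃o ℝ} {C : Set ℝ}

lemma exists_mem_c1Diffeo_replacesSamePrefixes (he : ∀ j, e j ∈ c1Diffeo)
    (hmaps : ∀ j, MapsTo (e j) (Icc 0 1) (Icc 0 1)) (hlt : ∀ ⦃i j⦄, i < j → e i 1 < e j 0)
    (hC : IsSelfSimilar e C) (hCsub : C ⊆ Icc 0 1) {f : ℝ → ℝ} (hf : IsHigmanThompson p f) :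
    ∃ g ∈ c1Diffeo, g '' C = C ∧ ReplacesSamePrefixes (digitMap p) (Ico 0 1) e C f g := by
  obtain ⟨N, hN⟩ := hf.exists_replacesPrefix
  choose! V hV using hN
  have htransfer {w v : List (Fin p)} (h : wordMap (digitMap p) w 1 ≤ wordMap (digitMap p) v 0) :
      wordMap e w 1 < wordMap e v 0 :=
    wordMap_one_lt_wordMap_zero mapsTo_digitMap_Icc digitMap_one_le_digitMap_zero hmaps hlt h
  have hsep : ∀ w w' : List (Fin p), w.length = N → w'.length = N → w ≠ w' →
      wordMap e w 0 ≤ wordMap e w' 0 →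
        wordMap e w 1 < wordMap e w' 0 ∧ wordMap e (V w) 1 < wordMap e (V w') 0 := by
    intro w w' hw hw' hne hle
    have h0 := left_mem_Icc.2 (zero_le_one' ℝ)
    have h1 := right_mem_Icc.2 (zero_le_one' ℝ)
    rcases wordMap_one_le_wordMap_zero_or mapsTo_digitMap_Icc digitMap_one_le_digitMap_zero
      (hw.trans hw'.symm) hne with h | h
    · refine ⟨htransfer h, htransfer ?_⟩
      rw [← hV w hw 1 h1, ← hV w' hw' 0 h0]
      exact hf.2.2.1.monotoneOn (mapsTo_wordMap mapsTo_digitMap_Icc w h1)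
        (mapsTo_wordMap mapsTo_digitMap_Icc w' h0) h
    · exact absurd (((wordMap e w').monotone zero_le_one).trans_lt (htransfer h)) hle.not_gt
  obtain ⟨g, hg, hgV⟩ := exists_mem_c1Diffeo_forall_replacesPrefix he
    (List.finite_length_eq (Fin p) N).toFinset V fun w hw w' hw' =>
      hsep w w' (by simpa using hw) (by simpa using hw')
  have hfg : ReplacesSamePrefixes (digitMap p) (Ico 0 1) e C f g :=
    .of_length_eq isSelfSimilar_digitMap.mapsTo hC.mapsTo fun w hw =>
      ⟨V w, fun t ht => hV w hw t (Ico_subset_Icc_self ht),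
        fun y hy => hgV w (by simpa using hw) y (hCsub hy)⟩
  exact ⟨g, hg, (hfg.mapsTo hC).image_subset.antisymm
    (hfg.surjOn isSelfSimilar_digitMap hC hf.surjOn_Ico), hfg⟩

theorem exists_c1Diffeo_realization (he : ∀ j, e j ∈ c1Diffeo)
    (hmaps : ∀ j, MapsTo (e j) (Icc 0 1) (Icc 0 1)) (hlt : ∀ ⦃i j⦄, i < j → e i 1 < e j 0)
    (hC : IsSelfSimilar e C) (hCsub : C ⊆ Icc 0 1) :
    ∃ Θ : (ℝ → ℝ) → ℝ ≃o ℝ,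
      (∀ f, IsHigmanThompson p f → Θ f ∈ c1Diffeo ∧ Θ f '' C = C) ∧
      (∀ f g, IsHigmanThompson p f → IsHigmanThompson p g → EqOn (Θ (f ∘ g)) (Θ f ∘ Θ g) C) ∧
      (∀ f g, IsHigmanThompson p f → IsHigmanThompson p g → EqOn (Θ f) (Θ g) C →
        EqOn f g (Icc 0 1)) := by
  rcases subsingleton_or_nontrivial (Fin p) with hp | hp
  · obtain rfl : p = 1 := (Fin.subsingleton_iff_le_one.1 hp).antisymm NeZero.one_le
    exact ⟨fun _ => 1, fun _ _ => ⟨one_mem _, image_id C⟩, fun _ _ _ _ => eqOn_refl _ _,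
      fun f g hf hg _ => hf.eqOn_id.trans hg.eqOn_id.symm⟩
  -- Choosing over all realizable maps, rather than over `F_p`, makes `Θ (f ∘ g)` a realization of
  -- `f ∘ g` without having to know that `F_p` is closed under composition.
  choose! Θ hΘ using fun f (hf : ∃ g ∈ c1Diffeo, g '' C = C ∧
    ReplacesSamePrefixes (digitMap p) (Ico 0 1) e C f g) => hf
  have hF : ∀ f, IsHigmanThompson p f → Θ f ∈ c1Diffeo ∧ Θ f '' C = C ∧
      ReplacesSamePrefixes (digitMap p) (Ico 0 1) e C f (Θ f) := fun f hf =>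
    hΘ f (exists_mem_c1Diffeo_replacesSamePrefixes he hmaps hlt hC hCsub hf)
  refine ⟨Θ, fun f hf => ⟨(hF f hf).1, (hF f hf).2.1⟩, fun f g hf hg => ?_, fun f g hf hg hfg => ?_⟩
  · obtain ⟨hΘf, hfC, hf'⟩ := hF f hf
    obtain ⟨hΘg, hgC, hg'⟩ := hF g hg
    have hcomp : ReplacesSamePrefixes (digitMap p) (Ico 0 1) e C (f ∘ g) (Θ f ∘ Θ g) :=
      hf'.comp isSelfSimilar_digitMap.mapsTo hC.mapsTo hg'
    have himage : ⇑(Θ f * Θ g) '' C = C := by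
      rw [RelIso.coe_mul, image_comp, hgC, hfC]
    exact (hΘ (f ∘ g) ⟨_, mul_mem hΘf hΘg, himage, hcomp⟩).2.2.eqOn isSelfSimilar_digitMap hC hcomp
      (eqOn_refl _ _)
  · have hIco : EqOn f g (Ico 0 1) :=
      (hF f hf).2.2.symm.eqOn hC isSelfSimilar_digitMap (hF g hg).2.2.symm hfg
    intro t ht
    rcases ht.2.lt_or_eq with ht1 | rfl
    · exact hIco ⟨ht.1, ht1⟩
    · exact hf.2.1.trans hg.2.1.symm

end Realization

lemma exists_perm_forall_lt {α : Type*} [LinearOrder α] {n : ℕ} {a b : Fin n → α}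
    (hab : ∀ j, a j ≤ b j)
    (hdisj : Pairwise fun i j => Disjoint (Icc (a i) (b i)) (Icc (a j) (b j))) :
    ∃ σ : Equiv.Perm (Fin n), ∀ ⦃i j⦄, i < j → b (σ i) < a (σ j) := by
  refine ⟨Tuple.sort a, fun i j hij => lt_of_not_ge fun hle => ?_⟩
  exact disjoint_left.1 (hdisj ((Tuple.sort a).injective.ne hij.ne))
    ⟨Tuple.monotone_sort a hij.le, hle⟩ (left_mem_Icc.2 (hab _))

theorem thompson_F_in_diffeo_group_of_IFS_general (n : ℕ) (φ : Fin (n + 1) → ℝ → ℝ)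
    (hsm : ∀ j, ContDiffOn ℝ 1 (φ j) (Icc 0 1))
    (hpos : ∀ j, ∀ x ∈ Icc (0 : ℝ) 1, 0 < derivWithin (φ j) (Icc 0 1) x)
    (hmaps : ∀ j, MapsTo (φ j) (Icc 0 1) (Icc 0 1))
    (hdisj : Pairwise fun i j => Disjoint (φ i '' Icc 0 1) (φ j '' Icc 0 1))
    (C : Set ℝ) (hCsub : C ⊆ Icc 0 1) (hCne : C.Nonempty) (hCattr : C = ⋃ j, φ j '' C) :
    ∃ Θ : (ℝ → ℝ) → (ℝ → ℝ),
      (∀ f, IsHigmanThompson (n + 1) f → ∃ g h : ℝ → ℝ, IsC1DiffeoPair g h ∧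
        StrictMono g ∧ g '' C = C ∧ EqOn (Θ f) g C) ∧
      (∀ f g, IsHigmanThompson (n + 1) f → IsHigmanThompson (n + 1) g →
        EqOn (Θ (f ∘ g)) (Θ f ∘ Θ g) C) ∧
      (∀ f g, IsHigmanThompson (n + 1) f → IsHigmanThompson (n + 1) g →
        EqOn (Θ f) (Θ g) C → EqOn f g (Icc 0 1)) := by
  choose e he heφ using fun j => exists_mem_c1Diffeo_eqOn_Icc zero_lt_one (hsm j) (hpos j)
  have hdisj_e : Pairwise fun i j => Disjoint (e i '' Icc 0 1) (e j '' Icc 0 1) := by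
    simpa only [(heφ _).image_eq] using hdisj
  have hC : IsSelfSimilar e C :=
    ⟨hCne, by simpa only [((heφ _).mono hCsub).image_eq] using hCattr.symm,
      fun i j hij => (hdisj_e hij).mono (image_mono hCsub) (image_mono hCsub)⟩
  obtain ⟨σ, hσ⟩ := exists_perm_forall_lt (fun j => (e j).monotone zero_le_one)
    (by simpa only [OrderIso.image_Icc] using hdisj_e)
  obtain ⟨Θ, hmem, hmul, hinj⟩ := exists_c1Diffeo_realization (fun j => he (σ j))
    (fun j => (hmaps (σ j)).congr (heφ (σ j)).symm) hσ (hC.comp_equiv σ) hCsub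
  exact ⟨fun f => Θ f, fun f hf => ⟨Θ f, (Θ f).symm, isC1DiffeoPair_of_mem_c1Diffeo (hmem f hf).1,
    (Θ f).strictMono, (hmem f hf).2, eqOn_refl _ _⟩, hmul, hinj⟩

/-- For a contractive invertible `C¹` IFS on `[0,1]` with `n+1` orientation-preserving
maps, the group of transformations of the attractor Cantor set induced by
orientation-preserving `C¹` diffeomorphisms preserving it contains a copy of the
Higman–Thompson group `F_{n+1}`: there is an injective multiplicative realization `Θ`
of `F_{n+1}` by restrictions of diffeomorphisms. -/
theorem thompson_F_in_diffeo_group_of_IFS (n : ℕ) (φ : Fin (n + 1) → ℝ → ℝ)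
    (hsm : ∀ j, ContDiff ℝ 1 (φ j)) (hmono : ∀ j, StrictMono (φ j))
    (hpos : ∀ j x, 0 < deriv (φ j) x)
    (himg : ∀ j, φ j '' Set.Icc 0 1 ⊆ Set.Ioo 0 1)
    (hdisj : ∀ i j, i ≠ j → φ i '' Set.Icc 0 1 ∩ φ j '' Set.Icc 0 1 = ∅)
    (hcontr : ∀ j, ∃ K : ℝ, K < 1 ∧ ∀ x ∈ Set.Icc (0 : ℝ) 1, ∀ y ∈ Set.Icc (0 : ℝ) 1,
      |φ j x - φ j y| ≤ K * |x - y|)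
    (C : Set ℝ) (hCsub : C ⊆ Set.Icc 0 1) (hCne : C.Nonempty) (hCcomp : IsCompact C)
    (hCattr : C = ⋃ j, φ j '' C) :
    ∃ Θ : (ℝ → ℝ) → (ℝ → ℝ),
      (∀ f, IsHigmanThompson (n + 1) f → ∃ g h : ℝ → ℝ, IsC1DiffeoPair g h ∧
        StrictMono g ∧ g '' C = C ∧ Set.EqOn (Θ f) g C) ∧
      (∀ f g, IsHigmanThompson (n + 1) f → IsHigmanThompson (n + 1) g →
        Set.EqOn (Θ (f ∘ g)) (Θ f ∘ Θ g) C) ∧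
      (∀ f g, IsHigmanThompson (n + 1) f → IsHigmanThompson (n + 1) g →
        Set.EqOn (Θ f) (Θ g) C → Set.EqOn f g (Set.Icc 0 1)) := by
  exact thompson_F_in_diffeo_group_of_IFS_general n φ (fun j => (hsm j).contDiffOn)
    (fun j x hx => by
      rw [((hsm j).differentiable one_ne_zero x).derivWithin (uniqueDiffOn_Icc zero_lt_one x hx)]
      exact hpos j x)
    (fun j => mapsTo_iff_image_subset.2 ((himg j).trans Ioo_subset_Icc_self))
    (fun i j hij => disjoint_iff_inter_eq_empty.2 (hdisj i j hij)) C hCsub hCne hCattr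
end
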